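/- Let 𝓛 be a second-order elliptic operator on ℝ^d satisfying the standing assumptions, and let V : ℝ^d → ℝ be Borel measurable, locally bounded, bounded from below, with λ*(𝓛,V) finite. Then for every λ > λ*(𝓛,V) and every open ball 𝓑 ⊂ ℝ^d there exists a constant δ > 0 such that λ = λ*(𝓛, V + δ·1_𝓑) and λ* is strictly monotone at V + δ·1_𝓑 on the right. -/

import Mathlib

open Metric Set Filter

noncomputable section

/-- `ℝ^d` as a Euclidean space. -/
abbrev Euc (d : ℕ) := EuclideanSpace ℝ (Fin d)

/-- First partial derivative `∂u/∂xᵢ`. -/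
def pd {d : ℕ} (u : Euc d → ℝ) (i : Fin d) (x : Euc d) : ℝ :=
  fderiv ℝ u x (EuclideanSpace.single i 1)

/-- Second partial derivative `∂²u/∂xᵢ∂xⱼ`. -/
def pd2 {d : ℕ} (u : Euc d → ℝ) (i j : Fin d) (x : Euc d) : ℝ :=
  fderiv ℝ (fun y => pd u j y) x (EuclideanSpace.single i 1)

/-- The second-order operator `𝓛u = Σ aᶦʲ ∂ᵢⱼu + Σ bᶦ ∂ᵢu`. -/
def Lop {d : ℕ} (a : Euc d → Matrix (Fin d) (Fin d) ℝ) (b : Euc d → Euc d)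
    (u : Euc d → ℝ) (x : Euc d) : ℝ :=
  (∑ i, ∑ j, a x i j * pd2 u i j x) + ∑ i, b x i * pd u i x

/-- Frobenius norm of a matrix. -/
def frob {d : ℕ} (m : Matrix (Fin d) (Fin d) ℝ) : ℝ :=
  Real.sqrt (∑ i, ∑ j, (m i j) ^ 2)

/-- The quadratic form `⟨ξ, m ξ⟩`. -/
def quadForm {d : ℕ} (m : Matrix (Fin d) (Fin d) ℝ) (ξ : Euc d) : ℝ :=
  ∑ i, ∑ j, m i j * ξ i * ξ j

/-- Local Hölder continuity on a set. -/
def LocallyHolderOn {E F : Type*} [PseudoMetricSpace E] [PseudoMetricSpace F]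
    (f : E → F) (s : Set E) : Prop :=
  ∀ x ∈ s, ∃ (C r : NNReal), 0 < r ∧ r ≤ 1 ∧ ∃ ε > 0, HolderOnWith C r f (Metric.ball x ε ∩ s)

/-- Local Hölder continuity. -/
def LocallyHolder {E F : Type*} [PseudoMetricSpace E] [PseudoMetricSpace F] (f : E → F) : Prop :=
  LocallyHolderOn f Set.univ

/-- The set of `λ ∈ ℝ` admitting a positive C² supersolution of `𝓛φ + Vφ ≤ λφ` on `D`. -/
def supersolutions {d : ℕ} (a : Euc d → Matrix (Fin d) (Fin d) ℝ) (b : Euc d → Euc d)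
    (V : Euc d → ℝ) (D : Set (Euc d)) : Set ℝ :=
  {lam | ∃ φ : Euc d → ℝ, (∀ x ∈ D, 0 < φ x) ∧ ContDiffOn ℝ 2 φ D ∧
    ∀ x ∈ D, Lop a b φ x + V x * φ x ≤ lam * φ x}

/-- The generalized principal eigenvalue `λ*(𝓛,V)` on `D`. -/
def lamStar {d : ℕ} (a : Euc d → Matrix (Fin d) (Fin d) ℝ) (b : Euc d → Euc d)
    (V : Euc d → ℝ) (D : Set (Euc d)) : ℝ :=
  sInf (supersolutions a b V D)

/-- `λ*(𝓛,V)` is finite: the defining set is nonempty and bounded below. -/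
def lamStarFinite {d : ℕ} (a : Euc d → Matrix (Fin d) (Fin d) ℝ) (b : Euc d → Euc d)
    (V : Euc d → ℝ) (D : Set (Euc d)) : Prop :=
  (supersolutions a b V D).Nonempty ∧ BddBelow (supersolutions a b V D)

/-- A ground state of `𝓛 + W` in the open connected set `D`: a positive C² solution of
minimal growth at infinity. -/
def IsGroundState {d : ℕ} (a : Euc d → Matrix (Fin d) (Fin d) ℝ) (b : Euc d → Euc d)
    (W : Euc d → ℝ) (u : Euc d → ℝ) (D : Set (Euc d)) : Prop :=
  (∀ x ∈ D, 0 < u x) ∧ ContDiffOn ℝ 2 u D ∧ (∀ x ∈ D, Lop a b u x + W x * u x = 0) ∧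
  ∀ K : Set (Euc d), IsCompact K → K ⊆ D →
    ∀ v : Euc d → ℝ, ContDiffOn ℝ 2 v (D \ K) → (∀ x ∈ D \ K, 0 < v x) →
      (∀ x ∈ D \ K, Lop a b v x + W x * v x ≤ 0) →
      ∃ K' : Set (Euc d), IsCompact K' ∧ K ⊆ K' ∧ K' ⊆ D ∧
        ∃ κ > 0, ∀ x ∈ D \ K', κ * u x ≤ v x

/-- Membership in `C₀⁺(ℝ^d)`: continuous, nonnegative, not identically zero, vanishing
at infinity. -/
def C0plus {d : ℕ} (h : Euc d → ℝ) : Prop :=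
  Continuous h ∧ (∀ x, 0 ≤ h x) ∧ (∃ x, h x ≠ 0) ∧ Tendsto h (cocompact (Euc d)) (nhds 0)

/-- `λ*` is strictly monotone at `V` on the right. -/
def StrictMonoRight {d : ℕ} (a : Euc d → Matrix (Fin d) (Fin d) ℝ) (b : Euc d → Euc d)
    (V : Euc d → ℝ) : Prop :=
  ∀ h : Euc d → ℝ, C0plus h →
    lamStar a b V Set.univ < lamStar a b (fun x => V x + h x) Set.univ

/-- `λ*` is strictly monotone at `V` (on both sides). -/
def StrictMonoAt {d : ℕ} (a : Euc d → Matrix (Fin d) (Fin d) ℝ) (b : Euc d → Euc d)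
    (V : Euc d → ℝ) : Prop :=
  ∀ h : Euc d → ℝ, C0plus h →
    lamStar a b (fun x => V x - h x) Set.univ < lamStar a b V Set.univ ∧
    lamStar a b V Set.univ < lamStar a b (fun x => V x + h x) Set.univ

/-- Standing assumptions (A1)–(A3) with `b` Borel measurable and locally bounded. -/
structure StandingB {d : ℕ} (a : Euc d → Matrix (Fin d) (Fin d) ℝ) (b : Euc d → Euc d) : Prop where
  posdef : ∀ x, (a x).PosDef
  aLip : ∀ R > 0, ∃ C > 0, ∀ x y : Euc d, ‖x‖ ≤ R → ‖y‖ ≤ R →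
    frob (a x - a y) ≤ C * ‖x - y‖
  bMeas : Measurable b
  bLocBdd : ∀ R > 0, ∃ C, ∀ x : Euc d, ‖x‖ ≤ R → ‖b x‖ ≤ C
  nondeg : ∀ R > 0, ∃ C > 0, ∀ x : Euc d, ‖x‖ ≤ R → ∀ ξ : Euc d,
    C⁻¹ * ‖ξ‖ ^ 2 ≤ quadForm (a x) ξ
  growth : ∃ C₀ > 0, ∀ x : Euc d,
    max (∑ i, b x i * x i) 0 + frob (a x) ≤ C₀ * (1 + ‖x‖ ^ 2)

/-- Standing assumptions (A1)–(A3) with `b` locally Hölder continuous. -/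
structure StandingH {d : ℕ} (a : Euc d → Matrix (Fin d) (Fin d) ℝ) (b : Euc d → Euc d) : Prop where
  posdef : ∀ x, (a x).PosDef
  aLip : ∀ R > 0, ∃ C > 0, ∀ x y : Euc d, ‖x‖ ≤ R → ‖y‖ ≤ R →
    frob (a x - a y) ≤ C * ‖x - y‖
  bHolder : LocallyHolder b
  nondeg : ∀ R > 0, ∃ C > 0, ∀ x : Euc d, ‖x‖ ≤ R → ∀ ξ : Euc d,
    C⁻¹ * ‖ξ‖ ^ 2 ≤ quadForm (a x) ξ
  growth : ∃ C₀ > 0, ∀ x : Euc d,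
    max (∑ i, b x i * x i) 0 + frob (a x) ≤ C₀ * (1 + ‖x‖ ^ 2)

open Topology

/-- The bilinear form `⟨a ∇u, ∇v⟩` of an operator with leading coefficient `a`. -/
def gradForm {d : ℕ} (a : Euc d → Matrix (Fin d) (Fin d) ℝ) (u v : Euc d → ℝ) (x : Euc d) : ℝ :=
  ∑ i, ∑ j, a x i j * pd u i x * pd v j x

section Calculus

variable {d : ℕ} {a : Euc d → Matrix (Fin d) (Fin d) ℝ} {b : Euc d → Euc d}
  {u v : Euc d → ℝ} {x : Euc d}

lemma pd_contDiff (hu : ContDiff ℝ 2 u) (i : Fin d) : ContDiff ℝ 1 (pd u i) := by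
  have h := hu.fderiv_right (m := 1) (by norm_num)
  exact h.clm_apply contDiff_const

lemma pd_differentiable (hu : ContDiff ℝ 2 u) (i : Fin d) : Differentiable ℝ (pd u i) :=
  (pd_contDiff hu i).differentiable (by norm_num)

lemma pd_add (hu : Differentiable ℝ u) (hv : Differentiable ℝ v) (i : Fin d) :
    pd (fun y => u y + v y) i = fun y => pd u i y + pd v i y := by
  funext y
  simp only [pd]
  rw [fderiv_fun_add (hu y) (hv y)]
  rfl

lemma pd_const_mul (hu : Differentiable ℝ u) (c : ℝ) (i : Fin d) :
    pd (fun y => c * u y) i = fun y => c * pd u i y := by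
  funext y
  simp only [pd]
  rw [fderiv_const_mul (hu y)]
  rfl

lemma pd_mul (hu : Differentiable ℝ u) (hv : Differentiable ℝ v) (i : Fin d) :
    pd (fun y => u y * v y) i = fun y => u y * pd v i y + v y * pd u i y := by
  funext y
  simp only [pd]
  rw [fderiv_fun_mul (hu y) (hv y)]
  rfl

lemma Lop_add (hu : ContDiff ℝ 2 u) (hv : ContDiff ℝ 2 v) :
    Lop a b (fun y => u y + v y) x = Lop a b u x + Lop a b v x := by
  have hu' := hu.differentiable (by norm_num)
  have hv' := hv.differentiable (by norm_num)
  have h2 : ∀ i j, pd2 (fun y => u y + v y) i j x = pd2 u i j x + pd2 v i j x := by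
    intro i j
    simp only [pd2]
    rw [pd_add hu' hv',
      fderiv_fun_add (pd_differentiable hu j x) (pd_differentiable hv j x)]
    rfl
  simp only [Lop, h2, pd_add hu' hv', mul_add, Finset.sum_add_distrib]
  ring

lemma Lop_const_mul (hu : ContDiff ℝ 2 u) (c : ℝ) :
    Lop a b (fun y => c * u y) x = c * Lop a b u x := by
  have hu' := hu.differentiable (by norm_num)
  have h2 : ∀ i j, pd2 (fun y => c * u y) i j x = c * pd2 u i j x := by
    intro i j
    simp only [pd2]
    rw [pd_const_mul hu', fderiv_const_mul (pd_differentiable hu j x)]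
    rfl
  simp only [Lop, h2, pd_const_mul hu', mul_add, Finset.mul_sum]
  congr 1
  · exact Finset.sum_congr rfl fun i _ => Finset.sum_congr rfl fun j _ => by ring
  · exact Finset.sum_congr rfl fun i _ => by ring

lemma Lop_zero : Lop a b (fun _ => (0 : ℝ)) x = 0 := by
  have h : ∀ i : Fin d, pd (fun _ : Euc d => (0 : ℝ)) i = fun _ => 0 := by
    intro i; funext y; simp [pd]
  simp [Lop, pd2, h]

lemma Lop_sum {ι : Type*} (s : Finset ι) (f : ι → Euc d → ℝ) (hf : ∀ i, ContDiff ℝ 2 (f i)) :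
    Lop a b (fun y => ∑ i ∈ s, f i y) x = ∑ i ∈ s, Lop a b (f i) x := by
  classical
  induction s using Finset.induction_on with
  | empty => simp [Lop_zero]
  | insert i s hi ih =>
    simp only [Finset.sum_insert hi]
    rw [Lop_add (hf i) (ContDiff.sum fun j _ => hf j), ih]

lemma Lop_mul (ha : ∀ i j, a x i j = a x j i) (hu : ContDiff ℝ 2 u) (hv : ContDiff ℝ 2 v) :
    Lop a b (fun y => u y * v y) x
      = u x * Lop a b v x + v x * Lop a b u x + 2 * gradForm a u v x := by
  have hu' := hu.differentiable (by norm_num)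
  have hv' := hv.differentiable (by norm_num)
  have h2 : ∀ i j, pd2 (fun y => u y * v y) i j x
      = u x * pd2 v i j x + v x * pd2 u i j x + pd u i x * pd v j x + pd u j x * pd v i x := by
    intro i j
    have e1 : pd2 (fun y => u y * v y) i j x
        = pd (fun y => u y * pd v j y + v y * pd u j y) i x := by
      simp only [pd2]; rw [pd_mul hu' hv']; rfl
    rw [e1, pd_add (hu'.fun_mul (pd_differentiable hv j)) (hv'.fun_mul (pd_differentiable hu j)),
      pd_mul hu' (pd_differentiable hv j), pd_mul hv' (pd_differentiable hu j)]
    have e2 : ∀ w : Euc d → ℝ, pd2 w i j x = pd (pd w j) i x := fun w => rfl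
    rw [e2, e2]
    ring
  have h3 : ∑ i, ∑ j, a x i j * (pd u j x * pd v i x) = gradForm a u v x := by
    rw [Finset.sum_comm]
    simp only [gradForm]
    refine Finset.sum_congr rfl fun i _ => Finset.sum_congr rfl fun j _ => ?_
    rw [ha j i]; ring
  have h4 : ∑ i, ∑ j, a x i j * (pd u i x * pd v j x) = gradForm a u v x := by
    simp only [gradForm, mul_assoc]
  simp only [Lop, h2, pd_mul hu' hv', mul_add, Finset.sum_add_distrib, h3, h4, Finset.mul_sum]
  have e1 : ∑ i, ∑ j, a x i j * (u x * pd2 v i j x) = ∑ i, ∑ j, u x * (a x i j * pd2 v i j x) :=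
    Finset.sum_congr rfl fun i _ => Finset.sum_congr rfl fun j _ => by ring
  have e2 : ∑ i, ∑ j, a x i j * (v x * pd2 u i j x) = ∑ i, ∑ j, v x * (a x i j * pd2 u i j x) :=
    Finset.sum_congr rfl fun i _ => Finset.sum_congr rfl fun j _ => by ring
  have e3 : ∑ i, b x i * (u x * pd v i x) = ∑ i, u x * (b x i * pd v i x) :=
    Finset.sum_congr rfl fun i _ => by ring
  have e4 : ∑ i, b x i * (v x * pd u i x) = ∑ i, v x * (b x i * pd u i x) :=
    Finset.sum_congr rfl fun i _ => by ring
  rw [e1, e2, e3, e4]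
  ring

lemma pd_comp {g : ℝ → ℝ} {g' : ℝ} (hg : HasDerivAt g g' (u x)) (hu : DifferentiableAt ℝ u x)
    (i : Fin d) : pd (fun y => g (u y)) i x = g' * pd u i x := by
  have h := (hg.comp_hasFDerivAt x hu.hasFDerivAt).fderiv
  simp only [pd]
  have h' : fderiv ℝ (fun y => g (u y)) x = g' • fderiv ℝ u x := h
  rw [h']; rfl

/-- Chain rule for second-order operators. -/
lemma Lop_comp {g g₁ : ℝ → ℝ} {g₂ : ℝ} (hu : ContDiff ℝ 2 u)
    (hg : ∀ y, HasDerivAt g (g₁ (u y)) (u y)) (hg₁ : HasDerivAt g₁ g₂ (u x)) :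
    Lop a b (fun y => g (u y)) x = g₁ (u x) * Lop a b u x + g₂ * gradForm a u u x := by
  have hu' := hu.differentiable (by norm_num)
  have hp : ∀ i, pd (fun y => g (u y)) i = fun y => g₁ (u y) * pd u i y := by
    intro i; funext y; exact pd_comp (hg y) (hu' y) i
  have h2 : ∀ i j, pd2 (fun y => g (u y)) i j x
      = g₁ (u x) * pd2 u i j x + g₂ * (pd u i x * pd u j x) := by
    intro i j
    have hd : DifferentiableAt ℝ (fun y => g₁ (u y)) x :=
      (hg₁.comp_hasFDerivAt x (hu' x).hasFDerivAt).differentiableAt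
    have e : fderiv ℝ (fun y => g₁ (u y)) x (EuclideanSpace.single i 1) = g₂ * pd u i x :=
      pd_comp hg₁ (hu' x) i
    simp only [pd2, hp]
    rw [fderiv_fun_mul hd (pd_differentiable hu j x)]
    simp only [add_apply, smul_apply, smul_eq_mul, e]
    ring
  simp only [Lop, gradForm, h2, hp, mul_add, Finset.sum_add_distrib, Finset.mul_sum]
  have e1 : ∑ i, ∑ j, a x i j * (g₁ (u x) * pd2 u i j x)
      = ∑ i, ∑ j, g₁ (u x) * (a x i j * pd2 u i j x) :=
    Finset.sum_congr rfl fun i _ => Finset.sum_congr rfl fun j _ => by ring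
  have e2 : ∑ i, ∑ j, a x i j * (g₂ * (pd u i x * pd u j x))
      = ∑ i, ∑ j, g₂ * (a x i j * pd u i x * pd u j x) :=
    Finset.sum_congr rfl fun i _ => Finset.sum_congr rfl fun j _ => by ring
  have e3 : ∑ i, b x i * (g₁ (u x) * pd u i x) = ∑ i, g₁ (u x) * (b x i * pd u i x) :=
    Finset.sum_congr rfl fun i _ => by ring
  rw [e1, e2, e3]
  ring

lemma gradForm_comp_right {g : ℝ → ℝ} {g' : ℝ} (hg : HasDerivAt g g' (v x))
    (hv : DifferentiableAt ℝ v x) :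
    gradForm a u (fun y => g (v y)) x = g' * gradForm a u v x := by
  simp only [gradForm, pd_comp hg hv, Finset.mul_sum]
  exact Finset.sum_congr rfl fun i _ => Finset.sum_congr rfl fun j _ => by ring

lemma exists_transpose_mul_self {m : Matrix (Fin d) (Fin d) ℝ} (hm : m.PosSemidef) :
    ∃ B : Matrix (Fin d) (Fin d) ℝ, ∀ i j, m i j = ∑ k, B k i * B k j := by
  obtain ⟨B, hB⟩ : ∃ B : Matrix (Fin d) (Fin d) ℝ, m = B.conjTranspose * B := by
    open scoped MatrixOrder in
    exact CStarAlgebra.nonneg_iff_eq_star_mul_self.1 (Matrix.nonneg_iff_posSemidef.2 hm)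
  exact ⟨B, fun i j => by simp [hB, Matrix.mul_apply]⟩

lemma quadForm_nonneg {m : Matrix (Fin d) (Fin d) ℝ} (hm : m.PosSemidef) (ξ : Euc d) :
    0 ≤ quadForm m ξ := by
  have h := hm.dotProduct_mulVec_nonneg fun i => ξ i
  simp only [dotProduct, Matrix.mulVec, star_trivial, Pi.star_apply, Finset.mul_sum] at h
  refine h.trans_eq (Finset.sum_congr rfl fun i _ => Finset.sum_congr rfl fun j _ => by ring)

lemma gradForm_self_nonneg (ha : (a x).PosDef) (u : Euc d → ℝ) : 0 ≤ gradForm a u u x := by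
  have := quadForm_nonneg ha.posSemidef (WithLp.toLp 2 fun i => pd u i x)
  simpa [quadForm, gradForm] using this

/-- Concave homogeneous combinations `v · g(u / v)` of two positive functions. -/
lemma Lop_perspective_le (ha : (a x).PosDef) {g g₁ : ℝ → ℝ} {g₂ : ℝ}
    (hu : ContDiff ℝ 2 u) (hv : ContDiff ℝ 2 v) (hvpos : ∀ y, 0 < v y) (hg2 : ContDiff ℝ 2 g)
    (hg : ∀ t, HasDerivAt g (g₁ t) t) (hg₁ : HasDerivAt g₁ g₂ (u x / v x)) (hconc : g₂ ≤ 0) :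
    Lop a b (fun y => v y * g (u y / v y)) x
      ≤ g₁ (u x / v x) * Lop a b u x
        + (g (u x / v x) - u x / v x * g₁ (u x / v x)) * Lop a b v x := by
  have hsym : ∀ i j, a x i j = a x j i := fun i j => by
    have := ha.isHermitian.apply i j; simpa using this.symm
  set r : Euc d → ℝ := fun y => u y / v y with hr
  have hrc : ContDiff ℝ 2 r := hu.div hv fun y => (hvpos y).ne'
  have e1 := Lop_mul (b := b) hsym hv hrc
  have e0 : (fun y => v y * r y) = u := by
    funext y; simp only [hr]; field_simp [(hvpos y).ne']
  rw [e0] at e1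
  have e2 := Lop_mul (b := b) hsym hv (hg2.comp hrc)
  have e3 := Lop_comp (a := a) (b := b) hrc (fun y => hg (r y)) hg₁
  have e4 := gradForm_comp_right (a := a) (u := v) (hg (r x))
    (hrc.differentiable (by norm_num) x)
  have hΓ := gradForm_self_nonneg ha r
  simp only [Function.comp_def] at e2
  show Lop a b (fun y => v y * g (r y)) x ≤ g₁ (r x) * Lop a b u x
        + (g (r x) - r x * g₁ (r x)) * Lop a b v x
  rw [e2, e3, e4, e1]
  have : v x * (g₂ * gradForm a r r x) ≤ 0 :=
    mul_nonpos_of_nonneg_of_nonpos (hvpos x).le (mul_nonpos_of_nonpos_of_nonneg hconc hΓ)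
  linarith

end Calculus

section Touching

variable {d : ℕ} {a : Euc d → Matrix (Fin d) (Fin d) ℝ} {b : Euc d → Euc d}
  {u v φ : Euc d → ℝ} {x : Euc d}

lemma fderiv_eq_sum_pd (u : Euc d → ℝ) (x ξ : Euc d) :
    fderiv ℝ u x ξ = ∑ j, ξ j * pd u j x := by
  have h : ξ = ∑ j, ξ j • EuclideanSpace.single j (1 : ℝ) := by
    have := (EuclideanSpace.basisFun (Fin d) ℝ).sum_repr ξ
    simpa using this.symm
  conv_lhs => rw [h]
  simp [pd, map_sum]

lemma deriv_deriv_nonpos_of_isLocalMax {g : ℝ → ℝ} {t : ℝ} (hg : ContinuousAt g t)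
    (h : IsLocalMax g t) : deriv (deriv g) t ≤ 0 := by
  by_contra! hpos
  have hmin := isLocalMin_of_deriv_deriv_pos hpos h.deriv_eq_zero hg
  have hc : g =ᶠ[𝓝 t] fun _ => g t := by
    filter_upwards [h, hmin] with s h1 h2 using le_antisymm h1 h2
  have h1 : deriv g =ᶠ[𝓝 t] deriv (fun _ => g t) := hc.deriv
  have h2 := h1.deriv_eq
  simp only [deriv_const'] at h2
  linarith

lemma sum_pd2_nonpos_of_isLocalMax (hu : ContDiff ℝ 2 u) (h : IsLocalMax u x) (ξ : Euc d) :
    ∑ i, ∑ j, ξ i * ξ j * pd2 u i j x ≤ 0 := by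
  have hu' := hu.differentiable (by norm_num)
  have hline : ∀ t : ℝ, HasDerivAt (fun t : ℝ => x + t • ξ) ξ t := fun t => by
    simpa using ((hasDerivAt_id t).smul_const ξ).const_add x
  have hg1 : deriv (fun t : ℝ => u (x + t • ξ)) = fun t => ∑ j, ξ j * pd u j (x + t • ξ) := by
    funext t
    rw [← fderiv_eq_sum_pd]
    exact ((hu' _).hasFDerivAt.comp_hasDerivAt t (hline t)).deriv
  have hg2 : HasDerivAt (fun t : ℝ => ∑ j, ξ j * pd u j (x + t • ξ))
      (∑ j, ξ j * ∑ i, ξ i * pd2 u i j x) 0 := by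
    refine HasDerivAt.fun_sum fun j _ => HasDerivAt.const_mul _ ?_
    have h0 : HasFDerivAt (pd u j) (fderiv ℝ (pd u j) x) (x + (0 : ℝ) • ξ) := by
      simpa using (pd_differentiable hu j x).hasFDerivAt
    have h1 := h0.comp_hasDerivAt (0 : ℝ) (hline 0)
    rw [fderiv_eq_sum_pd] at h1
    exact h1
  have hcont : Continuous fun t : ℝ => x + t • ξ := by fun_prop
  have hmax : IsLocalMax (fun t : ℝ => u (x + t • ξ)) 0 := by
    have h0 : Tendsto (fun t : ℝ => x + t • ξ) (𝓝 0) (𝓝 x) := by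
      simpa using hcont.tendsto 0
    have := h0.eventually h
    simpa [IsLocalMax, IsMaxFilter] using this
  have := deriv_deriv_nonpos_of_isLocalMax (hu.continuous.comp hcont).continuousAt hmax
  simp only [Function.comp_def] at this
  rw [hg1, hg2.deriv] at this
  refine le_of_eq_of_le ?_ this
  rw [Finset.sum_comm]
  simp only [Finset.mul_sum]
  exact Finset.sum_congr rfl fun i _ => Finset.sum_congr rfl fun j _ => by ring

lemma Lop_nonpos_of_isLocalMax (ha : (a x).PosDef) (hu : ContDiff ℝ 2 u) (h : IsLocalMax u x) :
    Lop a b u x ≤ 0 := by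
  have hpd : ∀ i, pd u i x = 0 := fun i => by simp [pd, h.fderiv_eq_zero]
  obtain ⟨B, hB⟩ := exists_transpose_mul_self ha.posSemidef
  have h1 : Lop a b u x = ∑ k, ∑ i, ∑ j, B k i * B k j * pd2 u i j x := by
    simp only [Lop, hpd, hB, mul_zero, Finset.sum_const_zero, add_zero, Finset.sum_mul]
    rw [Finset.sum_comm]
    rw [Finset.sum_congr rfl fun i _ => Finset.sum_comm]
    rw [Finset.sum_comm]
    refine Finset.sum_congr rfl fun k _ => ?_
    rw [Finset.sum_comm]
  rw [h1]
  refine Finset.sum_nonpos fun k _ => ?_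
  simpa using sum_pd2_nonpos_of_isLocalMax hu h (WithLp.toLp 2 (B k))

lemma Lop_sub_const_mul (hu : ContDiff ℝ 2 u) (hv : ContDiff ℝ 2 v) (c : ℝ) :
    Lop a b (fun y => u y - c * v y) x = Lop a b u x - c * Lop a b v x := by
  have h : (fun y => u y - c * v y) = fun y => u y + (-c) * v y := by funext y; ring
  rw [h, Lop_add hu (contDiff_const.mul hv), Lop_const_mul hv]
  ring

/-- Comparison principle: a compactly supported positive part lies below a multiple of a positive
supersolution if it is a strict subsolution wherever it exceeds that multiple. -/
lemma comparison (hS : StandingB a b) (hφ : ContDiff ℝ 2 φ) (hpos : ∀ y, 0 < φ y)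
    (hu : ContDiff ℝ 2 u) {k : Set (Euc d)} (hk : IsCompact k) (hoff : ∀ y, y ∉ k → u y ≤ 0)
    {M K : ℝ} (hM : 0 ≤ M) (hsup : ∀ y ∈ k, Lop a b φ y ≤ K * φ y)
    (hsub : ∀ y ∈ k, 0 < u y → M * φ y < u y → K * u y < Lop a b u y) (y : Euc d) :
    u y ≤ M * φ y := by
  by_contra! hlt
  have hy : y ∈ k := by
    by_contra hy
    have := hoff y hy
    have := mul_nonneg hM (hpos y).le
    linarith
  obtain ⟨p, hp, hmax⟩ := hk.exists_isMaxOn ⟨y, hy⟩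
    ((hu.continuous.div hφ.continuous fun z => (hpos z).ne').continuousOn)
  set c := u p / φ p with hc
  have hMc : M < c := lt_of_lt_of_le ((lt_div_iff₀ (hpos y)).2 hlt) (hmax hy)
  have hcp : u p = c * φ p := by rw [hc, div_mul_cancel₀ _ (hpos p).ne']
  have hglob : ∀ z, u z ≤ c * φ z := fun z => by
    by_cases hz : z ∈ k
    · exact (div_le_iff₀ (hpos z)).1 (hmax hz)
    · exact (hoff z hz).trans (mul_nonneg (hM.trans hMc.le) (hpos z).le)
  have hloc : IsLocalMax (fun z => u z - c * φ z) p :=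
    Eventually.of_forall fun z => by
      have := hglob z
      simp only [hcp]; linarith
  have h1 := Lop_nonpos_of_isLocalMax (b := b) (hS.posdef p) (hu.sub (contDiff_const.mul hφ)) hloc
  rw [Lop_sub_const_mul hu hφ] at h1
  have hup : 0 < u p := by rw [hcp]; exact mul_pos (hM.trans_lt hMc) (hpos p)
  have h2 := hsub p hp hup (by rw [hcp]; exact mul_lt_mul_of_pos_right hMc (hpos p))
  have h3 := mul_le_mul_of_nonneg_left (hsup p hp) (hM.trans hMc.le)
  have h4 : c * (K * φ p) = K * u p := by rw [hcp]; ring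
  linarith

end Touching

section Quadratic

variable {d : ℕ} {a : Euc d → Matrix (Fin d) (Fin d) ℝ} {b : Euc d → Euc d}
  {M : Matrix (Fin d) (Fin d) ℝ}

lemma pd_sum {ι : Type*} (s : Finset ι) {f : ι → Euc d → ℝ} (hf : ∀ i, Differentiable ℝ (f i))
    (k : Fin d) : pd (fun y => ∑ i ∈ s, f i y) k = fun y => ∑ i ∈ s, pd (f i) k y := by
  funext y
  simp only [pd]
  rw [fderiv_fun_sum fun i _ => hf i y]
  simp

lemma pd_coord (i k : Fin d) (c : ℝ) :
    pd (fun y : Euc d => y i - c) k = fun _ => if i = k then 1 else 0 := by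
  funext y
  have h : HasFDerivAt (fun y : Euc d => y i - c) (EuclideanSpace.proj i : Euc d →L[ℝ] ℝ) y :=
    (EuclideanSpace.proj i : Euc d →L[ℝ] ℝ).hasFDerivAt.sub_const c
  simp only [pd]
  rw [h.fderiv]
  simp

lemma contDiff_quadForm_sub (M : Matrix (Fin d) (Fin d) ℝ) (p : Euc d) (c : ℝ) :
    ContDiff ℝ 2 fun y => quadForm M (y - p) + c := by
  unfold quadForm
  simp only [PiLp.sub_apply]
  fun_prop

lemma pd_quadForm_sub (hM : ∀ i j, M i j = M j i) (p : Euc d) (c : ℝ) (k : Fin d) :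
    pd (fun y => quadForm M (y - p) + c) k = fun y => ∑ j, 2 * M k j * (y j - p j) := by
  have hl : ∀ i, Differentiable ℝ fun y : Euc d => y i - p i := fun i => by fun_prop
  have e : (fun y => quadForm M (y - p) + c)
      = fun y : Euc d => (∑ i, (y i - p i) * ∑ j, M i j * (y j - p j)) + c := by
    funext y
    simp only [quadForm, PiLp.sub_apply, Finset.mul_sum]
    congr 1
    exact Finset.sum_congr rfl fun i _ => Finset.sum_congr rfl fun j _ => by ring
  have hr : ∀ i, Differentiable ℝ fun y : Euc d => ∑ j, M i j * (y j - p j) := fun i => by fun_prop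
  rw [e, pd_add (by fun_prop) (by fun_prop), pd_sum _ (fun i => (hl i).fun_mul (hr i))]
  funext y
  have h0 : pd (fun _ : Euc d => c) k y = 0 := by simp [pd]
  simp only [h0, add_zero]
  have h1 : ∀ i, pd (fun y : Euc d => (y i - p i) * ∑ j, M i j * (y j - p j)) k y
      = (y i - p i) * M i k + (∑ j, M i j * (y j - p j)) * (if i = k then 1 else 0) := by
    intro i
    rw [pd_mul (hl i) (hr i), pd_coord, pd_sum _ (fun j => (hl j).const_mul (M i j))]
    simp only [pd_const_mul (hl _), pd_coord]
    simp
  simp only [h1, Finset.sum_add_distrib]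
  simp only [mul_ite, mul_one, mul_zero, Finset.sum_ite_eq', Finset.mem_univ, if_true]
  rw [← Finset.sum_add_distrib]
  exact Finset.sum_congr rfl fun j _ => by rw [hM j k]; ring

lemma Lop_quadForm_sub (hM : ∀ i j, M i j = M j i) (p : Euc d) (c : ℝ) (x : Euc d) :
    Lop a b (fun y => quadForm M (y - p) + c) x
      = 2 * (∑ i, ∑ j, a x i j * M i j) + 2 * ∑ i, b x i * ∑ j, M i j * (x j - p j) := by
  have hl : ∀ i, Differentiable ℝ fun y : Euc d => y i - p i := fun i => by fun_prop
  have h2 : ∀ i j, pd2 (fun y => quadForm M (y - p) + c) i j x = 2 * M i j := by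
    intro i j
    have : pd2 (fun y => quadForm M (y - p) + c) i j x
        = pd (pd (fun y => quadForm M (y - p) + c) j) i x := rfl
    rw [this, pd_quadForm_sub hM, pd_sum _ (fun k => (hl k).const_mul (2 * M j k))]
    simp only [pd_const_mul (hl _), pd_coord]
    simp [hM i j]
  simp only [Lop, h2, pd_quadForm_sub hM, Finset.mul_sum]
  congr 1
  · exact Finset.sum_congr rfl fun i _ => Finset.sum_congr rfl fun j _ => by ring
  · exact Finset.sum_congr rfl fun i _ => Finset.sum_congr rfl fun j _ => by ring

lemma gradForm_quadForm_sub (hM : ∀ i j, M i j = M j i) (p : Euc d) (c : ℝ) (x : Euc d) :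
    gradForm a (fun y => quadForm M (y - p) + c) (fun y => quadForm M (y - p) + c) x
      = 4 * quadForm (a x) (WithLp.toLp 2 fun i => ∑ j, M i j * (x j - p j)) := by
  obtain ⟨l, hl⟩ : ∃ l : Fin d → ℝ, l = fun i => ∑ j, M i j * (x j - p j) := ⟨_, rfl⟩
  have h : ∀ k, ∑ j, 2 * M k j * (x j - p j) = 2 * l k := fun k => by
    rw [hl, Finset.mul_sum]
    exact Finset.sum_congr rfl fun j _ => by ring
  rw [← hl]
  simp only [gradForm, pd_quadForm_sub hM, h]
  simp only [quadForm, Finset.mul_sum]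
  exact Finset.sum_congr rfl fun i _ => Finset.sum_congr rfl fun j _ => by ring

end Quadratic

section Splines

lemma contDiff_two_of_hasDerivAt {f f₁ f₂ : ℝ → ℝ} (h₁ : ∀ t, HasDerivAt f (f₁ t) t)
    (h₂ : ∀ t, HasDerivAt f₁ (f₂ t) t) (hc : Continuous f₂) : ContDiff ℝ 2 f := by
  have e₁ : deriv f = f₁ := funext fun t => (h₁ t).deriv
  have e₂ : deriv f₁ = f₂ := funext fun t => (h₂ t).deriv
  have c1 : ContDiff ℝ 1 f₁ :=
    contDiff_one_iff_deriv.2 ⟨fun t => (h₂ t).differentiableAt, by rwa [e₂]⟩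
  have : ContDiff ℝ (1 + 1) f :=
    contDiff_succ_iff_deriv.2 ⟨fun t => (h₁ t).differentiableAt, by simp, by rwa [e₁]⟩
  exact this.of_le (by norm_num)

lemma hasDerivAt_max_pow (n : ℕ) (t : ℝ) :
    HasDerivAt (fun t : ℝ => (max t 0) ^ (n + 2)) ((n + 2) * (max t 0) ^ (n + 1)) t := by
  rcases lt_trichotomy t 0 with ht | rfl | ht
  · have h : (fun t : ℝ => (max t 0) ^ (n + 2)) =ᶠ[𝓝 t] fun _ => 0 := by
      filter_upwards [gt_mem_nhds ht] with s hs
      rw [max_eq_right hs.le]; simp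
    rw [max_eq_right ht.le]
    simpa using (hasDerivAt_const t (0 : ℝ)).congr_of_eventuallyEq h
  · have h : (fun t : ℝ => (max t 0) ^ (n + 2)) =O[𝓝 0] fun t => ‖t - 0‖ ^ (n + 2) := by
      refine Asymptotics.IsBigO.of_bound 1 (Eventually.of_forall fun s => ?_)
      have h1 : max s 0 ≤ |s| := max_le (le_abs_self s) (abs_nonneg s)
      have h0 : 0 ≤ max s 0 := le_max_right _ _
      simp only [sub_zero, Real.norm_eq_abs, abs_pow, abs_abs, one_mul, abs_of_nonneg h0]
      gcongr
    simpa using (h.hasFDerivAt (by omega)).hasDerivAt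
  · have h : (fun t : ℝ => (max t 0) ^ (n + 2)) =ᶠ[𝓝 t] fun t => t ^ (n + 2) := by
      filter_upwards [lt_mem_nhds ht] with s hs
      rw [max_eq_left hs.le]
    rw [max_eq_left ht.le]
    refine HasDerivAt.congr_of_eventuallyEq ?_ h
    simpa using hasDerivAt_pow (n + 2) t

/-- The `C²` function `t ↦ (t⁺)³`. -/
def posCube (t : ℝ) : ℝ := (max t 0) ^ 3

lemma hasDerivAt_posCube (t : ℝ) : HasDerivAt posCube (3 * (max t 0) ^ 2) t := by
  have := hasDerivAt_max_pow 1 t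
  norm_num at this
  exact this

lemma hasDerivAt_posCube_deriv (t : ℝ) :
    HasDerivAt (fun t : ℝ => 3 * (max t 0) ^ 2) (6 * max t 0) t := by
  have := (hasDerivAt_max_pow 0 t).const_mul 3
  norm_num at this
  exact this.congr_deriv (by ring)

lemma contDiff_posCube : ContDiff ℝ 2 posCube :=
  contDiff_two_of_hasDerivAt hasDerivAt_posCube hasDerivAt_posCube_deriv (by fun_prop)

/-- A convex `C²` function vanishing on `(-∞, 1]` with derivative `1` on `[3, ∞)`. -/
def convexRamp (t : ℝ) : ℝ := (posCube (t - 1) - 2 * posCube (t - 2) + posCube (t - 3)) / 6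

/-- The derivative of `convexRamp`. -/
def convexRamp₁ (t : ℝ) : ℝ :=
  ((max (t - 1) 0) ^ 2 - 2 * (max (t - 2) 0) ^ 2 + (max (t - 3) 0) ^ 2) / 2

/-- The second derivative of `convexRamp`. -/
def convexRamp₂ (t : ℝ) : ℝ := max (t - 1) 0 - 2 * max (t - 2) 0 + max (t - 3) 0

lemma hasDerivAt_convexRamp (t : ℝ) : HasDerivAt convexRamp (convexRamp₁ t) t := by
  have h (c : ℝ) : HasDerivAt (fun t => posCube (t - c)) (3 * (max (t - c) 0) ^ 2) t :=
    (hasDerivAt_posCube (t - c)).comp_sub_const t c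
  have := (((h 1).sub ((h 2).const_mul 2)).add (h 3)).div_const 6
  exact this.congr_deriv (by simp only [convexRamp₁]; ring)

lemma hasDerivAt_convexRamp₁ (t : ℝ) : HasDerivAt convexRamp₁ (convexRamp₂ t) t := by
  have h (c : ℝ) : HasDerivAt (fun t => 3 * (max (t - c) 0) ^ 2) (6 * max (t - c) 0) t :=
    (hasDerivAt_posCube_deriv (t - c)).comp_sub_const t c
  have := (((h 1).sub ((h 2).const_mul 2)).add (h 3)).div_const 6
  refine (this.congr_deriv (by simp only [convexRamp₂]; ring)).congr_of_eventuallyEq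
    (Eventually.of_forall fun s => ?_)
  simp only [convexRamp₁, Pi.add_apply, Pi.sub_apply]
  ring

lemma contDiff_convexRamp : ContDiff ℝ 2 convexRamp :=
  contDiff_two_of_hasDerivAt hasDerivAt_convexRamp hasDerivAt_convexRamp₁
    (by unfold convexRamp₂; fun_prop)

lemma convexRamp_of_le {t : ℝ} (ht : t ≤ 1) :
    convexRamp t = 0 ∧ convexRamp₁ t = 0 ∧ convexRamp₂ t = 0 := by
  simp [convexRamp, convexRamp₁, convexRamp₂, posCube, max_eq_right (by linarith : t - 1 ≤ 0),
    max_eq_right (by linarith : t - 2 ≤ 0), max_eq_right (by linarith : t - 3 ≤ 0)]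

lemma convexRamp_of_ge {t : ℝ} (ht : 3 ≤ t) :
    convexRamp t = t - 2 ∧ convexRamp₁ t = 1 ∧ convexRamp₂ t = 0 := by
  simp only [convexRamp, convexRamp₁, convexRamp₂, posCube,
    max_eq_left (by linarith : 0 ≤ t - 1), max_eq_left (by linarith : 0 ≤ t - 2),
    max_eq_left (by linarith : 0 ≤ t - 3)]
  refine ⟨by ring, by ring, by ring⟩

lemma convexRamp_bounds (t : ℝ) : 0 ≤ convexRamp₂ t ∧ convexRamp₂ t ≤ 1 ∧ 0 ≤ convexRamp₁ t ∧
    convexRamp₁ t ≤ 1 ∧ 0 ≤ convexRamp t ∧ convexRamp t ≤ max t 0 ∧ t - 2 ≤ convexRamp t ∧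
    convexRamp t ≤ max (t - 1) 0 ∧
    convexRamp t ≤ t * convexRamp₁ t ∧ t * convexRamp₁ t ≤ convexRamp t + 2 := by
  rcases le_total t 1 with h1 | h1
  · obtain ⟨e0, e1, e2⟩ := convexRamp_of_le h1
    rw [e0, e1, e2]
    refine ⟨le_rfl, zero_le_one, le_rfl, zero_le_one, le_rfl, le_max_right _ _, by linarith,
      le_max_right _ _, by simp, by simp⟩
  rcases le_total 3 t with h3 | h3
  · obtain ⟨e0, e1, e2⟩ := convexRamp_of_ge h3
    rw [e0, e1, e2, max_eq_left (by linarith : (0 : ℝ) ≤ t),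
      max_eq_left (by linarith : (0 : ℝ) ≤ t - 1)]
    refine ⟨le_rfl, zero_le_one, zero_le_one, le_rfl, by linarith, by linarith, by linarith,
      by linarith, by linarith, by linarith⟩
  rw [max_eq_left (by linarith : (0 : ℝ) ≤ t), max_eq_left (by linarith : (0 : ℝ) ≤ t - 1)]
  rcases le_total t 2 with h2 | h2
  · simp only [convexRamp, convexRamp₁, convexRamp₂, posCube,
      max_eq_left (by linarith : 0 ≤ t - 1), max_eq_right (by linarith : t - 2 ≤ 0),
      max_eq_right (by linarith : t - 3 ≤ 0)]
    obtain ⟨s, rfl⟩ : ∃ s, t = s + 1 := ⟨t - 1, by ring⟩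
    have hs0 : 0 ≤ s := by linarith
    have hs1 : s ≤ 1 := by linarith
    have hs2 : s ^ 2 ≤ 1 := by nlinarith
    have hs3 : s ^ 3 ≤ s := by nlinarith
    have hs4 : 0 ≤ s ^ 3 := by positivity
    have hs5 : s ^ 3 ≤ s ^ 2 := by nlinarith [sq_nonneg s]
    norm_num
    refine ⟨by linarith, by linarith, by positivity, by nlinarith, by linarith, by linarith,
      by linarith, by linarith, by nlinarith, by nlinarith⟩
  · simp only [convexRamp, convexRamp₁, convexRamp₂, posCube,
      max_eq_left (by linarith : 0 ≤ t - 1), max_eq_left (by linarith : 0 ≤ t - 2),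
      max_eq_right (by linarith : t - 3 ≤ 0)]
    obtain ⟨s, rfl⟩ : ∃ s, t = 3 - s := ⟨3 - t, by ring⟩
    have hs0 : 0 ≤ s := by linarith
    have hs1 : s ≤ 1 := by linarith
    have hs2 : s ^ 2 ≤ 1 := by nlinarith
    have hs3 : s ^ 3 ≤ s := by nlinarith
    have hs4 : 0 ≤ s ^ 3 := by positivity
    have hs5 : s ^ 3 ≤ s ^ 2 := by nlinarith [sq_nonneg s]
    have hs6 : s ^ 2 ≤ s := by nlinarith
    have hs7 : 0 ≤ s ^ 2 := by positivity
    refine ⟨by linarith, by linarith, by nlinarith, by nlinarith, by nlinarith, by nlinarith,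
      by nlinarith, by nlinarith, by nlinarith, by nlinarith⟩

end Splines

section Barrier

variable {d : ℕ} {a : Euc d → Matrix (Fin d) (Fin d) ℝ} {b : Euc d → Euc d}
  {u φ : Euc d → ℝ}

lemma abs_le_frob (m : Matrix (Fin d) (Fin d) ℝ) (i j : Fin d) : |m i j| ≤ frob m := by
  rw [frob, ← Real.sqrt_sq_eq_abs]
  refine Real.sqrt_le_sqrt ?_
  refine le_trans ?_ (Finset.single_le_sum (f := fun i => ∑ j, m i j ^ 2)
    (fun i _ => Finset.sum_nonneg fun j _ => sq_nonneg _) (Finset.mem_univ i))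
  exact Finset.single_le_sum (f := fun j => m i j ^ 2) (fun j _ => sq_nonneg _)
    (Finset.mem_univ j)

lemma StandingB.local_bounds (hS : StandingB a b) {R : ℝ} (hR : 0 < R) :
    ∃ C ≥ 1, ∀ x : Euc d, ‖x‖ ≤ R → (∀ i j, |a x i j| ≤ C) ∧ (∀ i, |b x i| ≤ C) ∧
      ∀ ξ, C⁻¹ * ‖ξ‖ ^ 2 ≤ quadForm (a x) ξ := by
  obtain ⟨C₁, hC₁, h₁⟩ := hS.growth
  obtain ⟨C₂, h₂⟩ := hS.bLocBdd R hR
  obtain ⟨C₃, hC₃, h₃⟩ := hS.nondeg R hR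
  refine ⟨max 1 (max (C₁ * (1 + R ^ 2)) (max C₂ C₃)), le_max_left _ _, fun x hx => ⟨?_, ?_, ?_⟩⟩
  · intro i j
    have h := h₁ x
    have h0 : 0 ≤ max (∑ i, b x i * x i) 0 := le_max_right _ _
    have h3 : C₁ * (1 + ‖x‖ ^ 2) ≤ C₁ * (1 + R ^ 2) := by gcongr
    exact ((abs_le_frob (a x) i j).trans (by linarith)).trans
      ((le_max_left _ _).trans (le_max_right _ _))
  · intro i
    have h : |b x i| ≤ ‖b x‖ := by simpa using PiLp.norm_apply_le (b x) i
    exact (h.trans (h₂ x hx)).trans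
      ((le_max_left _ _).trans ((le_max_right _ _).trans (le_max_right _ _)))
  · intro ξ
    refine le_trans ?_ (h₃ x hx ξ)
    gcongr
    exact (le_max_right _ _).trans ((le_max_right _ _).trans (le_max_right _ _))

lemma pd2_continuous (hu : ContDiff ℝ 2 u) (i j : Fin d) : Continuous (pd2 u i j) :=
  ((pd_contDiff hu j).continuous_fderiv (by norm_num)).clm_apply continuous_const

lemma StandingB.Lop_bounded (hS : StandingB a b) (hu : ContDiff ℝ 2 u) (R : ℝ) :
    ∃ C ≥ 0, ∀ x : Euc d, ‖x‖ ≤ R → |Lop a b u x| ≤ C := by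
  obtain ⟨C, hC, h⟩ := hS.local_bounds (R := max R 1) (by positivity)
  have hc : Continuous fun x => (∑ i, ∑ j, C * |pd2 u i j x|) + ∑ i, C * |pd u i x| := by
    have h1 := fun i j => pd2_continuous hu i j
    have h2 := fun i => (pd_contDiff hu i).continuous
    fun_prop
  obtain ⟨D, hD⟩ := ((isCompact_closedBall (0 : Euc d) R).image hc).bddAbove
  refine ⟨max D 0, le_max_right _ _, fun x hx => ?_⟩
  obtain ⟨ha, hb, -⟩ := h x (hx.trans (le_max_left _ _))
  refine le_trans ?_ ((hD ⟨x, by simpa using hx, rfl⟩).trans (le_max_left _ _))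
  simp only [Lop]
  refine (abs_add_le _ _).trans (add_le_add ?_ ?_)
  · refine (Finset.abs_sum_le_sum_abs _ _).trans (Finset.sum_le_sum fun i _ =>
      (Finset.abs_sum_le_sum_abs _ _).trans (Finset.sum_le_sum fun j _ => ?_))
    rw [abs_mul]
    exact mul_le_mul_of_nonneg_right (ha i j) (abs_nonneg _)
  · refine (Finset.abs_sum_le_sum_abs _ _).trans (Finset.sum_le_sum fun i _ => ?_)
    rw [abs_mul]
    exact mul_le_mul_of_nonneg_right (hb i) (abs_nonneg _)

lemma quadForm_one (ξ : Euc d) : quadForm 1 ξ = ‖ξ‖ ^ 2 := by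
  rw [EuclideanSpace.real_norm_sq_eq]
  simp [quadForm, Matrix.one_apply, sq]

/-- A `C²` function supported in the ball of radius `R` about `p`, which is a strict subsolution
outside the ball of radius `r`. -/
structure IsBarrier {d : ℕ} (a : Euc d → Matrix (Fin d) (Fin d) ℝ) (b : Euc d → Euc d)
    (p : Euc d) (r R K : ℝ) (w : Euc d → ℝ) : Prop where
  contDiff : ContDiff ℝ 2 w
  nonneg : ∀ x, 0 ≤ w x
  le_one : ∀ x, w x ≤ 1
  pos : ∀ x ∈ ball p R, 0 < w x
  eq_zero : ∀ x, x ∉ ball p R → w x = 0 ∧ Lop a b w x = 0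
  strict : ∀ R₁ < R, ∃ c > 0, ∀ x, r ≤ dist x p → dist x p ≤ R₁ → K * w x + c ≤ Lop a b w x

lemma StandingB.exists_barrier (hS : StandingB a b) (p : Euc d) {r R K : ℝ} (hr : 0 < r)
    (hrR : r < R) (hK : 0 ≤ K) :
    ∃ w : Euc d → ℝ, IsBarrier a b p r R K w := by
  have hR : 0 < R := hr.trans hrR
  obtain ⟨C, hC1, hC⟩ := hS.local_bounds (R := ‖p‖ + R) (by positivity)
  have hC0 : 0 < C := by linarith
  set q : Euc d → ℝ := fun x => quadForm 1 (x - p) + 0 with hq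
  have hqd : ∀ x, q x = dist x p ^ 2 := fun x => by
    simp only [hq, quadForm_one, dist_eq_norm, add_zero]
  have hqc : ContDiff ℝ 2 q := contDiff_quadForm_sub 1 p 0
  obtain ⟨C₁, hC₁0, hC₁⟩ := hS.Lop_bounded hqc (‖p‖ + R)
  set m : ℝ := 4 * C⁻¹ * r ^ 2 with hm
  have hm0 : 0 < m := by positivity
  set α : ℝ := max 1 ((C₁ + K + 1) / m) with hα
  have hα1 : 1 ≤ α := le_max_left _ _
  have hαm : C₁ + K + 1 ≤ α * m := (div_le_iff₀ hm0).1 (le_max_right _ _)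
  set E : ℝ := Real.exp (-α * R ^ 2) with hE
  set θ : ℝ → ℝ := fun t => max (Real.exp (-α * t) - E) 0 with hθ
  set G : ℝ → ℝ := fun t => posCube (Real.exp (-α * t) - E) with hG
  set G₁ : ℝ → ℝ := fun t => 3 * θ t ^ 2 * (-α * Real.exp (-α * t)) with hG₁
  have hexp : ∀ t, HasDerivAt (fun t => Real.exp (-α * t)) (-α * Real.exp (-α * t)) t := fun t => by
    have := ((hasDerivAt_id t).const_mul (-α)).exp
    exact this.congr_deriv (by simp only [id]; ring)
  have hGd : ∀ t, HasDerivAt G (G₁ t) t := fun t =>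
    (hasDerivAt_posCube _).comp t ((hexp t).sub_const E)
  have hG₁d : ∀ t, HasDerivAt G₁ (6 * θ t * (-α * Real.exp (-α * t)) * (-α * Real.exp (-α * t))
      + 3 * θ t ^ 2 * (-α * (-α * Real.exp (-α * t)))) t := fun t =>
    ((hasDerivAt_posCube_deriv _).comp t ((hexp t).sub_const E)).mul ((hexp t).const_mul (-α))
  have hGc : ContDiff ℝ 2 G := contDiff_posCube.comp (by fun_prop)
  have hL : ∀ x, Lop a b (fun y => G (q y)) x = G₁ (q x) * Lop a b q x
      + (6 * θ (q x) * (-α * Real.exp (-α * q x)) * (-α * Real.exp (-α * q x))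
      + 3 * θ (q x) ^ 2 * (-α * (-α * Real.exp (-α * q x)))) * gradForm a q q x := fun x =>
    Lop_comp hqc (fun y => hGd (q y)) (hG₁d (q x))
  have hθ0 : ∀ t, 0 ≤ θ t := fun t => le_max_right _ _
  have hθe : ∀ t, θ t ≤ Real.exp (-α * t) := fun t =>
    max_le (by have := Real.exp_pos (-α * R ^ 2); simp only [hE]; linarith) (Real.exp_pos _).le
  have hle1 : ∀ x, Real.exp (-α * q x) ≤ 1 := fun x => by
    rw [Real.exp_le_one_iff, hqd]
    have := sq_nonneg (dist x p)
    nlinarith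
  refine ⟨fun x => G (q x), hGc.comp hqc, fun x => pow_nonneg (hθ0 _) 3, fun x => ?_, ?_, ?_, ?_⟩
  · exact pow_le_one₀ (hθ0 _) ((hθe _).trans (hle1 x))
  · intro x hx
    refine pow_pos (lt_max_of_lt_left ?_) 3
    rw [sub_pos, hE, Real.exp_lt_exp, hqd]
    have h1 : dist x p ^ 2 < R ^ 2 := pow_lt_pow_left₀ hx dist_nonneg two_ne_zero
    nlinarith
  · intro x hx
    have h0 : θ (q x) = 0 := by
      refine max_eq_right ?_
      rw [sub_nonpos, hE, Real.exp_le_exp, hqd]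
      have h1 : R ^ 2 ≤ dist x p ^ 2 := pow_le_pow_left₀ hR.le (not_lt.1 hx) 2
      nlinarith
    refine ⟨?_, ?_⟩
    · show θ (q x) ^ 3 = 0
      rw [h0]; norm_num
    · rw [hL]
      simp [hG₁, h0]
  · intro R₁ hR₁
    by_cases hR10 : 0 ≤ R₁
    swap
    · exact ⟨1, one_pos, fun x _ h => absurd (dist_nonneg.trans h) hR10⟩
    have hEE : E < Real.exp (-α * R₁ ^ 2) := by
      rw [hE, Real.exp_lt_exp]
      have : R₁ ^ 2 < R ^ 2 := pow_lt_pow_left₀ hR₁ hR10 two_ne_zero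
      nlinarith
    refine ⟨(Real.exp (-α * R₁ ^ 2) - E) ^ 2 * Real.exp (-α * R₁ ^ 2),
      mul_pos (pow_pos (sub_pos.2 hEE) 2) (Real.exp_pos _), fun x hx1 hx2 => ?_⟩
    have hee : Real.exp (-α * R₁ ^ 2) ≤ Real.exp (-α * q x) := by
      rw [Real.exp_le_exp, hqd]
      have : dist x p ^ 2 ≤ R₁ ^ 2 := pow_le_pow_left₀ dist_nonneg hx2 2
      nlinarith
    have hθ1 : Real.exp (-α * R₁ ^ 2) - E ≤ θ (q x) :=
      (sub_le_sub_right hee E).trans (le_max_left _ _)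
    have hxR : ‖x‖ ≤ ‖p‖ + R := by
      have : ‖x‖ ≤ ‖x - p‖ + ‖p‖ := by simpa using norm_add_le (x - p) p
      rw [← dist_eq_norm] at this
      linarith
    have hΓ : m ≤ gradForm a q q x := by
      have h1 : gradForm a q q x = 4 * quadForm (a x) (x - p) := by
        simp only [hq]
        rw [gradForm_quadForm_sub (fun i j => by simp [Matrix.one_apply, eq_comm])]
        congr 2
        ext i
        simp [Matrix.one_apply]
      rw [h1, hm]
      have h2 := (hC x hxR).2.2 (x - p)
      rw [← dist_eq_norm] at h2
      have h3 : C⁻¹ * r ^ 2 ≤ C⁻¹ * dist x p ^ 2 := by gcongr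
      linarith
    have hLq : Lop a b q x ≤ C₁ := (le_abs_self _).trans (hC₁ x hxR)
    rw [hL]
    show K * θ (q x) ^ 3 + _ ≤ _
    have he0 : 0 < Real.exp (-α * q x) := Real.exp_pos _
    have hte := hθe (q x)
    have ht0 := hθ0 (q x)
    simp only [hG₁]
    generalize θ (q x) = T at *
    generalize Real.exp (-α * q x) = e at *
    generalize Lop a b q x = l at *
    generalize gradForm a q q x = g at *
    have hg0 : 0 ≤ g := hm0.le.trans hΓ
    have h1 : (Real.exp (-α * R₁ ^ 2) - E) ^ 2 * Real.exp (-α * R₁ ^ 2) ≤ T ^ 2 * e := by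
      gcongr
    have h2 : K * T ^ 3 ≤ K * (T ^ 2 * e) := by
      have : T ^ 3 = T ^ 2 * T := by ring
      rw [this]; gcongr
    have h3 : 0 ≤ 6 * T * (-α * e) * (-α * e) * g := by
      have : 6 * T * (-α * e) * (-α * e) * g = 6 * T * (α * e) ^ 2 * g := by ring
      rw [this]; positivity
    have h4 : K + 1 ≤ α * g - l := by
      have : α * m ≤ α * g := by gcongr
      linarith
    have h5 : (K + 1) * (T ^ 2 * e) ≤ 3 * α * (T ^ 2 * e) * (α * g - l) := by
      have h6 : (0 : ℝ) ≤ T ^ 2 * e := by positivity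
      calc (K + 1) * (T ^ 2 * e) ≤ (α * g - l) * (T ^ 2 * e) := by gcongr
        _ ≤ (3 * α) * ((α * g - l) * (T ^ 2 * e)) := by
          refine le_mul_of_one_le_left (mul_nonneg (by linarith) h6) (by linarith)
        _ = _ := by ring
    nlinarith

/-- Lower bounds for positive supersolutions propagate from a small ball to a large one. -/
lemma IsBarrier.mul_le (hS : StandingB a b) {p : Euc d} {r R K : ℝ} {w : Euc d → ℝ}
    (hw : IsBarrier a b p r R K w) (hφ : ContDiff ℝ 2 φ) (hpos : ∀ y, 0 < φ y)
    (hsup : ∀ y ∈ closedBall p R, Lop a b φ y ≤ K * φ y) {m : ℝ} (hm : 0 < m)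
    (hlow : ∀ y ∈ closedBall p r, m ≤ φ y) (y : Euc d) : m * w y ≤ φ y := by
  have h := comparison hS hφ hpos (contDiff_const.mul hw.contDiff) (u := fun y => m * w y)
    (isCompact_closedBall p R) (M := 1) (K := K) (fun y hy => ?_) zero_le_one hsup ?_ y
  · simpa using h
  · rw [(hw.eq_zero y fun h => hy (ball_subset_closedBall h)).1, mul_zero]
  · intro y hy hu hlt
    rw [one_mul] at hlt
    have hyR : dist y p < R := by
      by_contra hn
      rw [(hw.eq_zero y hn).1, mul_zero] at hu
      exact lt_irrefl _ hu
    have hyr : r ≤ dist y p := by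
      by_contra! hn
      have h1 := hlow y (mem_closedBall.2 hn.le)
      have h2 := mul_le_mul_of_nonneg_left (hw.le_one y) hm.le
      linarith
    obtain ⟨c, hc, h⟩ := hw.strict _ hyR
    have h1 := h y hyr le_rfl
    rw [Lop_const_mul hw.contDiff]
    nlinarith

end Barrier

section Equilibrium

variable {ι : Type*} [Fintype ι]

lemma energy_add_single [DecidableEq ι] {κ : ι → ι → ℝ} (hsym : ∀ i j, κ i j = κ j i) (c : ι → ℝ)
    (i : ι) (s : ℝ) :
    (∑ k, ∑ j, κ k j * (c k + (if k = i then s else 0)) * (c j + (if j = i then s else 0)))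
        - 2 * ∑ k, (c k + (if k = i then s else 0))
      = (∑ k, ∑ j, κ k j * c k * c j) - 2 * (∑ k, c k)
        + (κ i i * s ^ 2 + 2 * s * ((∑ j, κ i j * c j) - 1)) := by
  have e : ∀ k j, κ k j * (c k + (if k = i then s else 0)) * (c j + (if j = i then s else 0))
      = κ k j * c k * c j + κ k j * c k * (if j = i then s else 0)
        + (if k = i then s else 0) * (κ k j * c j)
        + (if k = i then s else 0) * (κ k j * (if j = i then s else 0)) :=
    fun k j => by ring
  simp only [e, Finset.sum_add_distrib, ← Finset.mul_sum]
  simp only [mul_ite, ite_mul, mul_zero, zero_mul, Finset.sum_ite_eq',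
    Finset.mem_univ, if_true]
  have h : ∑ k, κ k i * c k * s = s * ∑ j, κ i j * c j := by
    rw [Finset.mul_sum]
    exact Finset.sum_congr rfl fun k _ => by rw [hsym k i]; ring
  rw [h]
  ring

/-- Existence of an equilibrium vector for a symmetric kernel with positive diagonal. -/
lemma exists_equilibrium {κ : ι → ι → ℝ} (hsym : ∀ i j, κ i j = κ j i)
    (hnn : ∀ i j, 0 ≤ κ i j) (hdiag : ∀ i, 0 < κ i i) :
    ∃ c : ι → ℝ, (∀ i, 0 ≤ c i) ∧ (∀ i, 1 ≤ ∑ j, κ i j * c j) ∧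
      ∀ i, 0 < c i → ∑ j, κ i j * c j ≤ 1 := by
  classical
  set J : (ι → ℝ) → ℝ := fun c => (∑ k, ∑ j, κ k j * c k * c j) - 2 * ∑ k, c k with hJ
  have hJc : Continuous J := by fun_prop
  obtain ⟨c, hc, hmin⟩ := (isCompact_Icc (a := (0 : ι → ℝ)) (b := fun i => 2 / κ i i)).exists_isMinOn
    ⟨0, le_rfl, fun i => (div_pos two_pos (hdiag i)).le⟩ hJc.continuousOn
  have hc0 : ∀ i, 0 ≤ c i := hc.1
  have hpert : ∀ i s, 0 ≤ c i + s → c i + s ≤ 2 / κ i i →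
      0 ≤ κ i i * s ^ 2 + 2 * s * ((∑ j, κ i j * c j) - 1) := by
    intro i s h0 h1
    have hmem : (fun k => c k + (if k = i then s else 0)) ∈ Icc (0 : ι → ℝ) (fun i => 2 / κ i i) := by
      constructor
      · intro k
        rcases eq_or_ne k i with rfl | hk
        · simpa using h0
        · simpa [hk] using hc0 k
      · intro k
        rcases eq_or_ne k i with rfl | hk
        · simpa using h1
        · simpa [hk] using hc.2 k
    have h := hmin hmem
    simp only [mem_ofPred_eq, hJ] at h
    rw [energy_add_single hsym] at h
    linarith
  have hself : ∀ i, κ i i * c i ≤ ∑ j, κ i j * c j := fun i =>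
    Finset.single_le_sum (f := fun j => κ i j * c j)
      (fun j _ => mul_nonneg (hnn i j) (hc0 j)) (Finset.mem_univ i)
  refine ⟨c, hc0, fun i => ?_, fun i hi => ?_⟩
  · by_contra! hlt
    have hk := hdiag i
    have hs := hself i
    set g := ∑ j, κ i j * c j with hg
    have hg0 : 0 ≤ g := (mul_nonneg hk.le (hc0 i)).trans hs
    have hsp : 0 < (1 - g) / κ i i := div_pos (by linarith) hk
    have h := hpert i ((1 - g) / κ i i) (by have := hc0 i; linarith) (by
      rw [le_div_iff₀ hk, add_mul, div_mul_cancel₀ _ hk.ne']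
      linarith [mul_comm (c i) (κ i i)])
    have e : κ i i * ((1 - g) / κ i i) ^ 2 + 2 * ((1 - g) / κ i i) * (g - 1)
        = - ((1 - g) * ((1 - g) / κ i i)) := by field_simp; ring
    rw [← hg, e] at h
    have := mul_pos (by linarith : 0 < 1 - g) hsp
    linarith
  · by_contra! hlt
    have hk := hdiag i
    set g := ∑ j, κ i j * c j with hg
    have hm : 0 < min (c i) ((g - 1) / κ i i) := lt_min hi (div_pos (by linarith) hk)
    have h := hpert i (-min (c i) ((g - 1) / κ i i))
      (by have := min_le_left (c i) ((g - 1) / κ i i); linarith)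
      (by have := hc.2 i; simp only at this; linarith)
    have h2 : κ i i * min (c i) ((g - 1) / κ i i) ≤ g - 1 := by
      have := mul_le_mul_of_nonneg_left (min_le_right (c i) ((g - 1) / κ i i)) hk.le
      rwa [mul_div_cancel₀ _ hk.ne'] at this
    rw [← hg] at h
    generalize min (c i) ((g - 1) / κ i i) = s at *
    have h3 := mul_le_mul_of_nonneg_left h2 hm.le
    have h4 := mul_pos hm (by linarith : 0 < g - 1)
    nlinarith

end Equilibrium

section Profiles

lemma hasDerivAt_rpow_of_pos (p : ℝ) {t : ℝ} (ht : 0 < t) :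
    HasDerivAt (fun t : ℝ => t ^ p) (p * t ^ (p - 1)) t :=
  Real.hasDerivAt_rpow_const (Or.inl ht.ne')

lemma exists_rpow_interpolation {p q : ℝ} (hp : p < 0) (hpq : q < p) {e : ℝ} (he : 0 < e) :
    ∃ C ≥ 0, ∀ t > 0, t ^ p ≤ e * t ^ q + C := by
  set t₀ : ℝ := e ^ (1 / (p - q)) with ht₀
  have ht₀pos : 0 < t₀ := Real.rpow_pos_of_pos he _
  refine ⟨t₀ ^ p, (Real.rpow_pos_of_pos ht₀pos _).le, fun t ht => ?_⟩
  rcases le_total t t₀ with h | h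
  · have h1 : t ^ p = t ^ (p - q) * t ^ q := by rw [← Real.rpow_add ht]; ring_nf
    have h2 : t ^ (p - q) ≤ t₀ ^ (p - q) := Real.rpow_le_rpow ht.le h (by linarith)
    have h3 : t₀ ^ (p - q) = e := by
      rw [ht₀, ← Real.rpow_mul he.le, one_div_mul_cancel (by linarith), Real.rpow_one]
    have h4 := Real.rpow_pos_of_pos ht q
    have h5 := Real.rpow_pos_of_pos ht₀pos p
    rw [h1]
    nlinarith
  · have h1 := Real.rpow_le_rpow_of_nonpos ht₀pos h hp.le
    have h4 := mul_pos he (Real.rpow_pos_of_pos ht q)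
    linarith

/-- The profile of the singular subsolutions. -/
lemma subsolution_profile {α D ε Λ T t l g : ℝ} (hα : 1 < α) (hαD : 4 * α = 2 * D + 5 / 2)
    (hε0 : 0 ≤ ε) (hε : ε * (1 + α) ≤ 1 / 2) (hΛ : Λ = 4 * α) (ht : 0 < t) (hT : Λ * T ≤ t)
    (hl : |l - 2 * D| ≤ ε) (hg : (4 - ε) * (t - T) ≤ g) :
    (α - 1) * t ^ (-α)
      ≤ (1 - α) * t ^ (-α) * l + (1 - α) * (-α * t ^ (-α - 1)) * g := by
  have h1 : t ^ (-α) = t ^ (-α - 1) * t := by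
    rw [← Real.rpow_add_one ht.ne']; ring_nf
  have hp : 0 < t ^ (-α - 1) := Real.rpow_pos_of_pos ht _
  rw [h1]
  generalize t ^ (-α - 1) = p at *
  have hl1 : l ≤ 2 * D + ε := by linarith [(abs_le.1 hl).2]
  have hε1 : ε ≤ 1 / 4 := by nlinarith
  have hTt : 4 * α * T ≤ t := hΛ ▸ hT
  have key : t + l * t ≤ α * g := by
    have e1 : α * ((4 - ε) * (t - T)) ≤ α * g := by gcongr
    have e2 : l * t ≤ (2 * D + ε) * t := by gcongr
    have e3 : (1 - ε / 4) * (4 * α * T) ≤ (1 - ε / 4) * t := by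
      apply mul_le_mul_of_nonneg_left hTt; linarith
    have e4 : ε * (1 + α) * t ≤ 1 / 2 * t := by gcongr
    have e5 : 4 * α * t = 2 * D * t + 5 / 2 * t := by rw [hαD]; ring
    have e6 : 0 ≤ ε * t := by positivity
    nlinarith
  have : 0 ≤ (α - 1) * p * (α * g - t - l * t) :=
    mul_nonneg (mul_nonneg (by linarith) hp.le) (by linarith)
  nlinarith

/-- The profile of the truncated singular supersolutions. -/
lemma exists_supersolution_profile {β D ε K S : ℝ} (hβ : 0 < β) (hβ1 : β ≠ 1)
    (hβD : 4 * β = 2 * D - 1) (hε0 : 0 ≤ ε) (hε : ε * (1 + β) ≤ 1 / 2) (hK : 0 ≤ K) (hS : 0 < S)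
    (hKS : K * S ≤ 1 / 4) :
    ∃ F F₁ F₂ : ℝ → ℝ, ∃ c > 0, ∃ C ≥ 0, (∀ t > 0, ContDiffAt ℝ 2 F t) ∧
      (∀ t > 0, HasDerivAt F (F₁ t) t) ∧ (∀ t > 0, HasDerivAt F₁ (F₂ t) t) ∧ (∀ t, 0 ≤ F t) ∧
      (∀ t ≥ S, F t = 0 ∧ F₁ t = 0 ∧ F₂ t = 0) ∧
      ∀ t > 0, ∀ l g, |l - 2 * D| ≤ ε → 0 ≤ g → g ≤ (4 + ε) * t →
        F₁ t * l + F₂ t * g + K * F t ≤ -c * t ^ (-β) + C := by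
  set f : ℝ → ℝ := fun t => (S ^ (1 - β) - t ^ (1 - β)) / (1 - β) with hf
  have hβ1' : (1 - β) ≠ 0 := sub_ne_zero.2 hβ1.symm
  have hfd : ∀ t > 0, HasDerivAt f (-t ^ (-β)) t := fun t ht => by
    have := ((hasDerivAt_rpow_of_pos (1 - β) ht).const_sub (S ^ (1 - β))).div_const (1 - β)
    refine this.congr_deriv ?_
    rw [show 1 - β - 1 = -β by ring]
    field_simp
  have hfd2 : ∀ t > 0, HasDerivAt (fun t : ℝ => -t ^ (-β)) (β * t ^ (-β - 1)) t := fun t ht =>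
    (hasDerivAt_rpow_of_pos (-β) ht).neg.congr_deriv (by ring)
  have hfS : f S = 0 := by simp [hf]
  have hanti : StrictAntiOn f (Ioi 0) := by
    refine strictAntiOn_of_deriv_neg (convex_Ioi 0)
      (fun t ht => (hfd t ht).continuousAt.continuousWithinAt) fun t ht => ?_
    rw [interior_Ioi] at ht
    rw [(hfd t ht).deriv]
    exact neg_lt_zero.2 (Real.rpow_pos_of_pos ht _)
  have hfub : ∀ t > 0, t ≤ S → f t ≤ S * t ^ (-β) := by
    intro t ht htS
    rcases htS.eq_or_lt with rfl | htS
    · rw [hfS]; have := Real.rpow_pos_of_pos ht (-β); positivity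
    obtain ⟨ξ, hξ, h⟩ := exists_hasDerivAt_eq_slope f (fun t => -t ^ (-β)) htS
      (fun s hs => (hfd s (ht.trans_le hs.1)).continuousAt.continuousWithinAt)
      (fun s hs => hfd s (ht.trans hs.1))
    rw [hfS, eq_div_iff (by linarith)] at h
    have h1 : ξ ^ (-β) ≤ t ^ (-β) := Real.rpow_le_rpow_of_nonpos ht hξ.1.le (by linarith)
    have h2 : 0 < ξ ^ (-β) := Real.rpow_pos_of_pos (ht.trans hξ.1) _
    nlinarith
  have hS2 : 0 < S / 2 := by positivity
  have hfhalf : 0 < f (S / 2) := by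
    rw [← hfS]; exact hanti hS2 hS (by linarith)
  set k : ℝ := 3 / f (S / 2) with hk
  have hk0 : 0 < k := by positivity
  have hkf : k * f (S / 2) = 3 := div_mul_cancel₀ _ hfhalf.ne'
  set P : ℝ := (S / 2) ^ (-β) with hP
  have hP0 : 0 < P := Real.rpow_pos_of_pos hS2 _
  refine ⟨fun t => convexRamp (k * f t), fun t => convexRamp₁ (k * f t) * (k * -t ^ (-β)),
    fun t => convexRamp₂ (k * f t) * (k * -t ^ (-β)) * (k * -t ^ (-β))
      + convexRamp₁ (k * f t) * (k * (β * t ^ (-β - 1))), k / 4, by positivity,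
    k ^ 2 * P ^ 2 * ((4 + ε) * S) + k / 2 * P, by positivity, ?_, ?_, ?_, ?_, ?_, ?_⟩
  · intro t ht
    refine contDiff_convexRamp.contDiffAt.comp t (contDiffAt_const.mul ?_)
    exact (contDiffAt_const.sub (contDiffAt_id.rpow_const_of_ne ht.ne')).div_const _
  · intro t ht
    exact (hasDerivAt_convexRamp _).comp t ((hfd t ht).const_mul k)
  · intro t ht
    exact ((hasDerivAt_convexRamp₁ _).comp t ((hfd t ht).const_mul k)).mul
      ((hfd2 t ht).const_mul k)
  · exact fun t => (convexRamp_bounds _).2.2.2.2.1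
  · intro t ht
    have h1 : k * f t ≤ 0 := by
      refine mul_nonpos_of_nonneg_of_nonpos hk0.le ?_
      rw [← hfS]
      exact hanti.antitoneOn hS (hS.trans_le ht) ht
    obtain ⟨e0, e1, e2⟩ := convexRamp_of_le (h1.trans zero_le_one)
    simp [e0, e1, e2]
  · intro t ht l g hl hg0 hg
    have hl1 : 2 * D - ε ≤ l := by linarith [(abs_le.1 hl).1]
    obtain ⟨b1, b2, b3, b4, b5, b6, -⟩ := convexRamp_bounds (k * f t)
    have hp0 : 0 < t ^ (-β) := Real.rpow_pos_of_pos ht _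
    have hp1 : 0 < t ^ (-β - 1) := Real.rpow_pos_of_pos ht _
    have hpp : t ^ (-β) = t ^ (-β - 1) * t := by rw [← Real.rpow_add_one ht.ne']; ring_nf
    have main : -t ^ (-β) * l + β * t ^ (-β - 1) * g ≤ -(1 / 2) * t ^ (-β) := by
      rw [hpp]
      have e1 : β * t ^ (-β - 1) * g ≤ β * t ^ (-β - 1) * ((4 + ε) * t) := by gcongr
      have e2 : t ^ (-β - 1) * t * (2 * D - ε) ≤ t ^ (-β - 1) * t * l := by gcongr
      have e3 : 0 ≤ t ^ (-β - 1) * t := by positivity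
      have e4 : β * t ^ (-β - 1) * ((4 + ε) * t)
          = (2 * D - 1 + ε * β) * (t ^ (-β - 1) * t) := by rw [← hβD]; ring
      rw [e4] at e1
      generalize t ^ (-β - 1) * t = w at *
      have e5 : ε * (1 + β) * w ≤ 1 / 2 * w := by gcongr
      linarith
    rcases le_total S t with hSt | htS
    · have h1 : k * f t ≤ 0 := by
        refine mul_nonpos_of_nonneg_of_nonpos hk0.le ?_
        rw [← hfS]
        exact hanti.antitoneOn hS (hS.trans_le hSt) hSt
      obtain ⟨e0, e1, e2⟩ := convexRamp_of_le (h1.trans zero_le_one)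
      simp only [e0, e1, e2]
      have h2 : t ^ (-β) ≤ P := Real.rpow_le_rpow_of_nonpos hS2 (by linarith) (by linarith)
      have h3 : 0 ≤ k ^ 2 * P ^ 2 * ((4 + ε) * S) := by positivity
      nlinarith
    have hF : K * convexRamp (k * f t) ≤ k / 4 * t ^ (-β) := by
      have hf0 : 0 ≤ f t := by
        rw [← hfS]; exact hanti.antitoneOn ht hS htS
      rw [max_eq_left (by positivity)] at b6
      have h1 := hfub t ht htS
      calc K * convexRamp (k * f t) ≤ K * (k * (S * t ^ (-β))) := by
            gcongr; exact b6.trans (by gcongr)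
        _ = K * S * (k * t ^ (-β)) := by ring
        _ ≤ 1 / 4 * (k * t ^ (-β)) := by gcongr
        _ = _ := by ring
    have expand : convexRamp₁ (k * f t) * (k * -t ^ (-β)) * l
        + (convexRamp₂ (k * f t) * (k * -t ^ (-β)) * (k * -t ^ (-β))
        + convexRamp₁ (k * f t) * (k * (β * t ^ (-β - 1)))) * g
        = convexRamp₁ (k * f t) * k * (-t ^ (-β) * l + β * t ^ (-β - 1) * g)
        + convexRamp₂ (k * f t) * (k ^ 2 * (t ^ (-β)) ^ 2 * g) := by ring
    rw [expand]
    rcases le_total t (S / 2) with hts | hst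
    · have h1 : 3 ≤ k * f t := by
        rw [← hkf]
        exact mul_le_mul_of_nonneg_left (hanti.antitoneOn ht hS2 hts) hk0.le
      obtain ⟨-, e1, e2⟩ := convexRamp_of_ge h1
      rw [e1, e2]
      have h2 := mul_le_mul_of_nonneg_left main hk0.le
      have h3 : 0 ≤ k ^ 2 * P ^ 2 * ((4 + ε) * S) + k / 2 * P := by positivity
      linarith
    · have h2 : t ^ (-β) ≤ P := Real.rpow_le_rpow_of_nonpos hS2 hst (by linarith)
      have h3 : convexRamp₁ (k * f t) * k * (-t ^ (-β) * l + β * t ^ (-β - 1) * g) ≤ 0 :=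
        mul_nonpos_of_nonneg_of_nonpos (by positivity) (by nlinarith)
      have h4 : convexRamp₂ (k * f t) * (k ^ 2 * (t ^ (-β)) ^ 2 * g)
          ≤ 1 * (k ^ 2 * P ^ 2 * ((4 + ε) * S)) := by
        gcongr
        exact hg.trans (by gcongr)
      have h5 : k / 4 * t ^ (-β) ≤ k / 4 * P := by gcongr
      linarith

end Profiles

section Frame

variable {d : ℕ} {a : Euc d → Matrix (Fin d) (Fin d) ℝ} {b : Euc d → Euc d}

lemma abs_coord_le (ξ : Euc d) (i : Fin d) : |ξ i| ≤ ‖ξ‖ := by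
  simpa using PiLp.norm_apply_le ξ i

lemma abs_quadForm_le (m : Matrix (Fin d) (Fin d) ℝ) (ξ : Euc d) :
    |quadForm m ξ| ≤ (∑ i, ∑ j, |m i j|) * ‖ξ‖ ^ 2 := by
  simp only [quadForm, Finset.sum_mul]
  refine (Finset.abs_sum_le_sum_abs _ _).trans (Finset.sum_le_sum fun i _ =>
    (Finset.abs_sum_le_sum_abs _ _).trans (Finset.sum_le_sum fun j _ => ?_))
  rw [abs_mul, abs_mul, mul_assoc, sq]
  have h1 := abs_coord_le ξ i
  have h2 := abs_coord_le ξ j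
  gcongr

lemma quadForm_neg (m : Matrix (Fin d) (Fin d) ℝ) (ξ : Euc d) :
    quadForm m (-ξ) = quadForm m ξ := by
  simp [quadForm]

lemma quadForm_add_le {m : Matrix (Fin d) (Fin d) ℝ} (hm : ∀ ξ, 0 ≤ quadForm m ξ) (ξ η : Euc d) :
    quadForm m (ξ + η) ≤ 2 * quadForm m ξ + 2 * quadForm m η := by
  have h : quadForm m (ξ + η) + quadForm m (ξ - η) = 2 * quadForm m ξ + 2 * quadForm m η := by
    simp only [quadForm, Finset.mul_sum, ← Finset.sum_add_distrib, PiLp.add_apply, PiLp.sub_apply]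
    exact Finset.sum_congr rfl fun i _ => Finset.sum_congr rfl fun j _ => by ring
  linarith [hm (ξ - η)]

lemma quadForm_mulVec_inv {m : Matrix (Fin d) (Fin d) ℝ} (hm : IsUnit m)
    (ξ : Euc d) :
    quadForm m (WithLp.toLp 2 (m⁻¹.mulVec ξ)) = quadForm m⁻¹ ξ := by
  have h : m.mulVec (m⁻¹.mulVec ξ) = ξ := by
    rw [Matrix.mulVec_mulVec, Matrix.mul_nonsing_inv _ ((Matrix.isUnit_iff_isUnit_det m).1 hm),
      Matrix.one_mulVec]
  have e1 : quadForm m (WithLp.toLp 2 (m⁻¹.mulVec ξ))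
      = ∑ i, m⁻¹.mulVec ξ i * m.mulVec (m⁻¹.mulVec ξ) i := by
    simp only [quadForm]
    refine Finset.sum_congr rfl fun i _ => ?_
    rw [Matrix.mulVec.eq_1 m, dotProduct, Finset.mul_sum]
    exact Finset.sum_congr rfl fun j _ => by ring
  rw [e1, h]
  simp only [quadForm, Matrix.mulVec, dotProduct, Finset.sum_mul]
  exact Finset.sum_congr rfl fun i _ => Finset.sum_congr rfl fun j _ => by ring

/-- Near every point there are quadratic forms adapted to the operator. -/
lemma StandingB.exists_frame (hS : StandingB a b) (z : Euc d) {ε : ℝ} (hε : 0 < ε) :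
    ∃ M : Matrix (Fin d) (Fin d) ℝ, ∃ m₁ > 0, ∃ m₂ > 0, ∃ r > 0, r ≤ 1 ∧
      (∀ i j, M i j = M j i) ∧ (∀ ξ : Euc d, m₁ * ‖ξ‖ ^ 2 ≤ quadForm M ξ) ∧
      (∀ ξ : Euc d, quadForm M ξ ≤ m₂ * ‖ξ‖ ^ 2) ∧
      ∀ x ∈ closedBall z r, ∀ y ∈ closedBall z r, ∀ c : ℝ,
        |Lop a b (fun p => quadForm M (p - y) + c) x - 2 * d| ≤ ε ∧
        |gradForm a (fun p => quadForm M (p - y) + c) (fun p => quadForm M (p - y) + c) x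
          - 4 * quadForm M (x - y)| ≤ ε * quadForm M (x - y) := by
  obtain ⟨C, hC1, hC⟩ := hS.local_bounds (R := ‖z‖ + 1) (by positivity)
  obtain ⟨L, hL0, hL⟩ := hS.aLip (‖z‖ + 1) (by positivity)
  have hC0 : 0 < C := by linarith
  have hz : ‖z‖ ≤ ‖z‖ + 1 := by linarith
  have hunit : IsUnit (a z) := (hS.posdef z).isUnit
  obtain ⟨M, hM⟩ : ∃ M, M = (a z)⁻¹ := ⟨_, rfl⟩
  have hsym : ∀ i j, M i j = M j i := fun i j => by
    have := (hS.posdef z).isHermitian.inv.apply i j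
    simpa [hM] using this.symm
  obtain ⟨Sm, hSm⟩ : ∃ Sm, Sm = ∑ i, ∑ j, |M i j| := ⟨_, rfl⟩
  have hSm0 : 0 ≤ Sm := by rw [hSm]; positivity
  have hrow : ∀ i, ∑ j, |M i j| ≤ Sm := fun i => by
    rw [hSm]
    exact Finset.single_le_sum (f := fun i => ∑ j, |M i j|) (fun i _ => by positivity)
      (Finset.mem_univ i)
  have hquad : ∀ ξ : Euc d, quadForm (a z) (WithLp.toLp 2 (M.mulVec ξ)) = quadForm M ξ := fun ξ => by
    rw [hM]; exact quadForm_mulVec_inv hunit ξ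
  have hη : ∀ ξ : Euc d, ‖WithLp.toLp 2 (M.mulVec ξ)‖ ^ 2 ≤ C * quadForm M ξ := fun ξ => by
    have h := (hC z hz).2.2 (WithLp.toLp 2 (M.mulVec ξ))
    rw [hquad, inv_mul_le_iff₀ hC0] at h
    exact h
  have hQ0 : ∀ ξ : Euc d, 0 ≤ quadForm M ξ := fun ξ => by
    rw [← hquad]; exact quadForm_nonneg (hS.posdef z).posSemidef _
  have hlow : ∀ ξ : Euc d, ‖ξ‖ ^ 2 ≤ (d * (C * d) ^ 2 * C + 1) * quadForm M ξ := fun ξ => by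
    have hback : ∀ i, ξ i = ∑ j, a z i j * M.mulVec ξ j := fun i => by
      have h : (a z).mulVec (M.mulVec ξ) = ξ := by
        rw [hM, Matrix.mulVec_mulVec,
          Matrix.mul_nonsing_inv _ ((Matrix.isUnit_iff_isUnit_det _).1 hunit), Matrix.one_mulVec]
      exact (congrFun h i).symm
    have hi : ∀ i, |ξ i| ≤ C * d * ‖WithLp.toLp 2 (M.mulVec ξ)‖ := fun i => by
      rw [hback i]
      refine (Finset.abs_sum_le_sum_abs _ _).trans ?_
      refine (Finset.sum_le_card_nsmul _ _ (C * ‖WithLp.toLp 2 (M.mulVec ξ)‖) fun j _ => ?_).trans ?_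
      · rw [abs_mul]
        have h1 := (hC z hz).1 i j
        have h2 := abs_coord_le (WithLp.toLp 2 (M.mulVec ξ)) j
        exact mul_le_mul h1 h2 (abs_nonneg _) hC0.le
      · simp only [Finset.card_univ, Fintype.card_fin, nsmul_eq_mul]
        exact le_of_eq (by ring)
    rw [EuclideanSpace.real_norm_sq_eq]
    refine (Finset.sum_le_card_nsmul _ _ ((C * d) ^ 2 * (C * quadForm M ξ)) fun i _ => ?_).trans ?_
    · rw [← sq_abs]
      calc |ξ i| ^ 2 ≤ (C * d * ‖WithLp.toLp 2 (M.mulVec ξ)‖) ^ 2 := by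
            have := hi i; gcongr
        _ = (C * d) ^ 2 * ‖WithLp.toLp 2 (M.mulVec ξ)‖ ^ 2 := by ring
        _ ≤ _ := by have := hη ξ; gcongr
    · simp only [Finset.card_univ, Fintype.card_fin, nsmul_eq_mul]
      nlinarith [hQ0 ξ]
  have hB : 0 < 1 + 2 * L * Sm + 4 * d * C * Sm + 4 * L * d ^ 2 * C := by positivity
  obtain ⟨B, hBe⟩ : ∃ B, B = 1 + 2 * L * Sm + 4 * d * C * Sm + 4 * L * d ^ 2 * C := ⟨_, rfl⟩
  rw [← hBe] at hB
  have hrB : min 1 (ε / B) * B ≤ ε := by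
    calc min 1 (ε / B) * B ≤ ε / B * B := by gcongr; exact min_le_right _ _
      _ = ε := div_mul_cancel₀ _ hB.ne'
  have hr0 : 0 < min 1 (ε / B) := lt_min one_pos (div_pos hε hB)
  refine ⟨M, (d * (C * d) ^ 2 * C + 1)⁻¹, by positivity, Sm + 1, by positivity, min 1 (ε / B),
    hr0, min_le_left _ _, hsym, fun ξ => ?_, fun ξ => ?_, ?_⟩
  · rw [inv_mul_le_iff₀ (by positivity)]; exact hlow ξ
  · have h := (le_abs_self _).trans (abs_quadForm_le M ξ)
    rw [← hSm] at h
    nlinarith [sq_nonneg ‖ξ‖]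
  intro x hx y hy c
  have hr1 : min 1 (ε / B) ≤ 1 := min_le_left _ _
  generalize min 1 (ε / B) = r at *
  have hxz : ‖x - z‖ ≤ r := by simpa [dist_eq_norm] using hx
  have hyz : ‖y - z‖ ≤ r := by simpa [dist_eq_norm] using hy
  have hxn : ‖x‖ ≤ ‖z‖ + 1 := by
    have : ‖x‖ ≤ ‖x - z‖ + ‖z‖ := by simpa using norm_add_le (x - z) z
    linarith
  have hxy : ‖x - y‖ ≤ 2 * r := by
    have : ‖x - y‖ ≤ ‖x - z‖ + ‖y - z‖ := by
      have := norm_sub_le (x - z) (y - z)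
      simpa using this
    linarith
  have hδ : ∀ i j, |a x i j - a z i j| ≤ L * r := fun i j => by
    have h1 := abs_le_frob (a x - a z) i j
    have h2 := hL x z hxn hz
    calc |a x i j - a z i j| ≤ L * ‖x - z‖ := h1.trans h2
      _ ≤ L * r := by gcongr
  have hLr : 0 ≤ L * r := by positivity
  have hsubsum : ∀ m : Matrix (Fin d) (Fin d) ℝ,
      |(∑ i, ∑ j, a x i j * m i j) - ∑ i, ∑ j, a z i j * m i j| ≤ L * r * ∑ i, ∑ j, |m i j| := by
    intro m
    rw [← Finset.sum_sub_distrib]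
    simp only [← Finset.sum_sub_distrib, Finset.mul_sum, ← sub_mul]
    refine (Finset.abs_sum_le_sum_abs _ _).trans (Finset.sum_le_sum fun i _ =>
      (Finset.abs_sum_le_sum_abs _ _).trans (Finset.sum_le_sum fun j _ => ?_))
    rw [abs_mul]
    exact mul_le_mul_of_nonneg_right (hδ i j) (abs_nonneg _)
  have hexp : r * (1 + 2 * L * Sm + 4 * d * C * Sm + 4 * L * d ^ 2 * C) ≤ ε := hBe ▸ hrB
  have hd0 : (0 : ℝ) ≤ d := Nat.cast_nonneg d
  refine ⟨?_, ?_⟩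
  · rw [Lop_quadForm_sub hsym]
    have htr : ∑ i, ∑ j, a z i j * M i j = d := by
      have h1 : (a z * M).trace = d := by
        rw [hM, Matrix.mul_nonsing_inv _ ((Matrix.isUnit_iff_isUnit_det _).1 hunit)]
        simp
      rw [← h1, Matrix.trace]
      refine Finset.sum_congr rfl fun i _ => ?_
      simp only [Matrix.diag_apply, Matrix.mul_apply]
      exact Finset.sum_congr rfl fun j _ => by rw [hsym i j]
    have h1 := hsubsum M
    rw [htr, ← hSm] at h1
    have h2 : |∑ i, b x i * ∑ j, M i j * (x j - y j)| ≤ d * (C * (Sm * (2 * r))) := by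
      refine (Finset.abs_sum_le_sum_abs _ _).trans ?_
      refine (Finset.sum_le_card_nsmul _ _ (C * (Sm * (2 * r))) fun i _ => ?_).trans ?_
      · rw [abs_mul]
        refine mul_le_mul ((hC x hxn).2.1 i) ?_ (abs_nonneg _) hC0.le
        refine (Finset.abs_sum_le_sum_abs _ _).trans ?_
        calc ∑ j, |M i j * (x j - y j)| ≤ ∑ j, |M i j| * (2 * r) := by
              refine Finset.sum_le_sum fun j _ => ?_
              rw [abs_mul]
              exact mul_le_mul_of_nonneg_left ((abs_coord_le (x - y) j).trans hxy) (abs_nonneg _)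
          _ = (∑ j, |M i j|) * (2 * r) := by rw [Finset.sum_mul]
          _ ≤ Sm * (2 * r) := by have := hrow i; gcongr
      · simp
    rw [abs_le] at h1 h2 ⊢
    have p1 : 0 ≤ r * (4 * L * d ^ 2 * C) := by positivity
    constructor <;> nlinarith [h1.1, h1.2, h2.1, h2.2]
  · rw [gradForm_quadForm_sub hsym]
    have e : (WithLp.toLp 2 fun i => ∑ j, M i j * (x j - y j))
        = WithLp.toLp 2 (M.mulVec (x - y).ofLp) := rfl
    have h1 := abs_quadForm_le (a x - a z) (WithLp.toLp 2 (M.mulVec (x - y).ofLp))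
    have h2 : quadForm (a x - a z) (WithLp.toLp 2 (M.mulVec (x - y).ofLp))
        = quadForm (a x) (WithLp.toLp 2 (M.mulVec (x - y).ofLp)) - quadForm M (x - y) := by
      rw [← hquad]
      simp only [quadForm, ← Finset.sum_sub_distrib, Matrix.sub_apply, sub_mul]
    have h3 : ∑ i, ∑ j, |(a x - a z) i j| ≤ d * (d * (L * r)) := by
      refine (Finset.sum_le_card_nsmul _ _ (d * (L * r)) fun i _ => ?_).trans (by simp)
      refine (Finset.sum_le_card_nsmul _ _ (L * r) fun j _ => ?_).trans (by simp)
      exact hδ i j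
    rw [e]
    rw [h2] at h1
    have h4 := hη (x - y)
    have hQ := hQ0 (x - y)
    generalize quadForm (a x) (WithLp.toLp 2 (M.mulVec (x - y).ofLp)) = q at *
    generalize quadForm M (x - y) = Q at *
    have h5 : |q - Q| ≤ d * (d * (L * r)) * (C * Q) := by
      refine h1.trans ?_
      gcongr
    have h6 : 4 * (d * (d * (L * r)) * (C * Q)) ≤ ε * Q := by
      have p1 : 0 ≤ r * (1 + 2 * L * Sm + 4 * d * C * Sm) := by positivity
      have : 4 * (d * (d * (L * r)) * C) ≤ ε := by nlinarith
      nlinarith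
    have e7 : 4 * q - 4 * Q = 4 * (q - Q) := by ring
    rw [e7, abs_mul, abs_of_pos (by norm_num : (0 : ℝ) < 4)]
    linarith

end Frame

section LocalKernels

variable {d : ℕ}

/-- Regularised kernels near a point `z`, comparable with powers of a quadratic form `Q`:
`sub y T` is a strict subsolution of `𝓛 - K` away from the pole `y`, and `super y T` is a
compactly supported function whose image under `𝓛 + K` is very negative near the pole. -/
structure LocalKernels (a : Euc d → Matrix (Fin d) (Fin d) ℝ) (b : Euc d → Euc d) (z : Euc d)
    (K : ℝ) where
  (ρ r S Λ β p m₁ m₂ lowSub lowSuper highSuper : ℝ)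
  (Q : Euc d → ℝ)
  (sub super : Euc d → ℝ → Euc d → ℝ)
  ρ_pos : 0 < ρ
  ρ_le : ρ ≤ r
  r_le : r ≤ 1
  S_pos : 0 < S
  Λ_pos : 0 < Λ
  β_pos : 0 < β
  p_neg : p < 0
  β_lt : -β < p
  m₁_pos : 0 < m₁
  m₂_pos : 0 < m₂
  lowSub_pos : 0 < lowSub
  lowSuper_pos : 0 < lowSuper
  highSuper_nonneg : 0 ≤ highSuper
  Q_lower : ∀ ξ, m₁ * ‖ξ‖ ^ 2 ≤ Q ξ
  Q_upper : ∀ ξ, Q ξ ≤ m₂ * ‖ξ‖ ^ 2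
  Q_neg : ∀ ξ, Q (-ξ) = Q ξ
  Q_add_le : ∀ ξ η, Q (ξ + η) ≤ 2 * Q ξ + 2 * Q η
  sub_contDiff : ∀ y, ∀ T > 0, ContDiff ℝ 2 (sub y T)
  sub_le : ∀ y, ∀ T > 0, ∀ x, sub y T x ≤ (Q (x - y) + T) ^ p
  sub_nonpos : ∀ y ∈ ball z ρ, ∀ T > 0, ∀ x ∉ closedBall z r, sub y T x ≤ 0
  sub_lower : ∀ y ∈ ball z ρ, ∀ T > 0, T ≤ S / 4 → ∀ x ∈ ball z ρ, lowSub ≤ sub y T x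
  sub_lt : ∀ y ∈ ball z ρ, ∀ T > 0, ∀ x ∈ closedBall z r, Λ * T ≤ Q (x - y) + T →
    K * sub y T x < Lop a b (sub y T) x
  super_contDiff : ∀ y, ∀ T > 0, ContDiff ℝ 2 (super y T)
  super_nonneg : ∀ y, ∀ T > 0, ∀ x, 0 ≤ super y T x
  super_eq_zero : ∀ y ∈ ball z ρ, ∀ T > 0, ∀ x ∉ ball z r,
    super y T x = 0 ∧ Lop a b (super y T) x = 0
  super_le : ∀ y ∈ ball z ρ, ∀ T > 0, ∀ x ∈ closedBall z r,
    Lop a b (super y T) x + K * super y T x ≤ -lowSuper * (Q (x - y) + T) ^ (-β) + highSuper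

variable {a : Euc d → Matrix (Fin d) (Fin d) ℝ} {b : Euc d → Euc d}

lemma half_sub_quarter_ne_one (d : ℕ) : (d : ℝ) / 2 - 1 / 4 ≠ 1 := by
  intro h
  have h1 : (2 * d : ℝ) = 5 := by linarith
  have h2 : 2 * d = 5 := by exact_mod_cast h1
  omega

set_option maxHeartbeats 1000000 in
lemma StandingB.nonempty_localKernels (hS : StandingB a b) (hd : 1 ≤ d) (z : Euc d) {K : ℝ}
    (hK : 0 ≤ K) : Nonempty (LocalKernels a b z K) := by
  have hd1 : (1 : ℝ) ≤ d := by exact_mod_cast hd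
  obtain ⟨α, hα⟩ : ∃ α : ℝ, α = d / 2 + 5 / 8 := ⟨_, rfl⟩
  obtain ⟨β, hβ⟩ : ∃ β : ℝ, β = d / 2 - 1 / 4 := ⟨_, rfl⟩
  have hα1 : 9 / 8 ≤ α := by linarith
  have hβ0 : 0 < β := by linarith
  have hβ1 : β ≠ 1 := hβ ▸ half_sub_quarter_ne_one d
  obtain ⟨ε, hε⟩ : ∃ ε : ℝ, ε = 1 / (2 * (1 + α)) := ⟨_, rfl⟩
  have hε0 : 0 < ε := by rw [hε]; positivity
  have hεα : ε * (1 + α) ≤ 1 / 2 := by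
    rw [hε]; apply le_of_eq; field_simp
  have hεβ : ε * (1 + β) ≤ 1 / 2 := by nlinarith
  obtain ⟨M, m₁, hm₁, m₂, hm₂, r, hr, hr1, hsym, hlow, hupp, hfr⟩ := hS.exists_frame z hε0
  have hQ0 : ∀ ξ, 0 ≤ quadForm M ξ := fun ξ => le_trans (by positivity) (hlow ξ)
  obtain ⟨S, hSe⟩ : ∃ S : ℝ, S = min (m₁ * r ^ 2 / 4) (1 / (16 * (K + 1))) := ⟨_, rfl⟩
  have hS0 : 0 < S := by rw [hSe]; apply lt_min <;> positivity
  have hSr : S ≤ m₁ * r ^ 2 / 4 := hSe ▸ min_le_left _ _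
  have hKS : K * S ≤ 1 / 16 := by
    calc K * S ≤ (K + 1) * (1 / (16 * (K + 1))) := by
          have : S ≤ 1 / (16 * (K + 1)) := hSe ▸ min_le_right _ _
          gcongr; linarith
      _ = 1 / 16 := by field_simp
  obtain ⟨ρ, hρ0, hρr, hρS⟩ : ∃ ρ : ℝ, 0 < ρ ∧ ρ ≤ r / 2 ∧ m₂ * (2 * ρ) ^ 2 ≤ S / 4 := by
    refine ⟨min (r / 2) (Real.sqrt (S / (16 * m₂))), by
      apply lt_min <;> positivity, min_le_left _ _, ?_⟩
    have h1 : min (r / 2) (Real.sqrt (S / (16 * m₂))) ≤ Real.sqrt (S / (16 * m₂)) := min_le_right _ _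
    have h0 : 0 ≤ min (r / 2) (Real.sqrt (S / (16 * m₂))) := by
      apply le_min <;> positivity
    calc m₂ * (2 * min (r / 2) (Real.sqrt (S / (16 * m₂)))) ^ 2
        ≤ m₂ * (2 * Real.sqrt (S / (16 * m₂))) ^ 2 := by gcongr
      _ = m₂ * (4 * (S / (16 * m₂))) := by
          rw [mul_pow, Real.sq_sqrt (by positivity)]; norm_num
      _ = S / 4 := by field_simp; norm_num
  obtain ⟨F, F₁, F₂, c, hc, C, hC, hFc, hF1, hF2, hFnn, hFz, hFle⟩ :=
    exists_supersolution_profile (D := d) (S := S) hβ0 hβ1 (by linarith) hε0.le hεβ hK hS0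
      (by linarith)
  have hsC : ∀ y T, ContDiff ℝ 2 fun x => quadForm M (x - y) + T := fun y T =>
    contDiff_quadForm_sub M y T
  have hspos : ∀ y x, ∀ T > 0, 0 < quadForm M (x - y) + T := fun y x T hT =>
    add_pos_of_nonneg_of_pos (hQ0 _) hT
  have hfar : ∀ y ∈ ball z ρ, ∀ x ∉ ball z r, ∀ T > 0, S ≤ quadForm M (x - y) + T := by
    intro y hy x hx T hT
    rw [mem_ball] at hx hy
    have h1 : r / 2 ≤ ‖x - y‖ := by
      rw [← dist_eq_norm]
      linarith [dist_triangle x y z]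
    have h2 : m₁ * (r / 2) ^ 2 ≤ m₁ * ‖x - y‖ ^ 2 := by gcongr
    nlinarith [hlow (x - y)]
  refine ⟨{
    ρ := ρ, r := r, S := S, Λ := 4 * α, β := β, p := 1 - α, m₁ := m₁, m₂ := m₂
    lowSub := (S / 2) ^ (1 - α) - S ^ (1 - α), lowSuper := c, highSuper := C
    Q := quadForm M
    sub := fun y T x => (quadForm M (x - y) + T) ^ (1 - α) - S ^ (1 - α)
    super := fun y T x => F (quadForm M (x - y) + T)
    ρ_pos := hρ0, ρ_le := by linarith, r_le := hr1, S_pos := hS0, Λ_pos := by linarith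
    β_pos := hβ0, p_neg := by linarith, β_lt := by linarith, m₁_pos := hm₁, m₂_pos := hm₂
    lowSub_pos := sub_pos.2 (Real.rpow_lt_rpow_of_neg (by positivity) (by linarith) (by linarith))
    lowSuper_pos := hc, highSuper_nonneg := hC, Q_lower := hlow, Q_upper := hupp
    Q_neg := quadForm_neg M, Q_add_le := quadForm_add_le hQ0
    sub_contDiff := fun y T hT =>
      ((hsC y T).rpow_const_of_ne fun x => (hspos y x T hT).ne').sub contDiff_const
    sub_le := fun y T hT x => sub_le_self _ (by positivity)
    sub_nonpos := fun y hy T hT x hx => sub_nonpos.2 <|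
      Real.rpow_le_rpow_of_nonpos hS0 (hfar y hy x (fun h => hx (ball_subset_closedBall h)) T hT)
        (by linarith)
    sub_lower := ?_
    sub_lt := ?_
    super_contDiff := fun y T hT => contDiff_iff_contDiffAt.2 fun x =>
      (hFc _ (hspos y x T hT)).comp x (hsC y T).contDiffAt
    super_nonneg := fun y T hT x => hFnn _
    super_eq_zero := ?_
    super_le := ?_ }⟩
  · intro y hy T hT hTS x hx
    have h1 : ‖x - y‖ ≤ 2 * ρ := by
      rw [mem_ball] at hx hy
      rw [← dist_eq_norm]
      linarith [dist_triangle_right x y z]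
    have h2 : m₂ * ‖x - y‖ ^ 2 ≤ m₂ * (2 * ρ) ^ 2 := by gcongr
    have h3 := hupp (x - y)
    exact sub_le_sub_right (Real.rpow_le_rpow_of_nonpos (hspos y x T hT) (by linarith)
      (by linarith)) _
  · intro y hy T hT x hx hT'
    have hy' : y ∈ closedBall z r := by
      rw [mem_ball] at hy; rw [mem_closedBall]; linarith
    obtain ⟨hl, hg⟩ := hfr x hx y hy' T
    obtain ⟨s, hs⟩ : ∃ s, s = quadForm M (x - y) + T := ⟨_, rfl⟩
    have hs0 : 0 < s := hs ▸ hspos y x T hT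
    have hLf : Lop a b (fun x => (quadForm M (x - y) + T) ^ (1 - α) - S ^ (1 - α)) x
        = (1 - α) * s ^ (-α) * Lop a b (fun p => quadForm M (p - y) + T) x
          + (1 - α) * (-α * s ^ (-α - 1)) *
            gradForm a (fun p => quadForm M (p - y) + T) (fun p => quadForm M (p - y) + T) x := by
      rw [hs]
      refine Lop_comp (g := fun t => t ^ (1 - α) - S ^ (1 - α)) (g₁ := fun t => (1 - α) * t ^ (-α))
        (hsC y T) (fun x => ?_) ?_
      · have := (Real.hasDerivAt_rpow_const (p := 1 - α) (Or.inl (hspos y x T hT).ne')).sub_const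
          (S ^ (1 - α))
        simpa [show (1 - α - 1 : ℝ) = -α by ring] using this
      · exact (Real.hasDerivAt_rpow_const (p := -α) (Or.inl (hspos y x T hT).ne')).const_mul (1 - α)
    have hsub := subsolution_profile (α := α) (D := d) (ε := ε) (Λ := 4 * α) (T := T) (t := s)
      (l := Lop a b (fun p => quadForm M (p - y) + T) x)
      (g := gradForm a (fun p => quadForm M (p - y) + T) (fun p => quadForm M (p - y) + T) x)
      (by linarith) (by linarith) hε0.le hεα rfl hs0 (hs ▸ hT') hl (by
        have := (abs_le.1 hg).1
        have e : s - T = quadForm M (x - y) := by rw [hs]; ring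
        rw [e]; linarith)
    show K * ((quadForm M (x - y) + T) ^ (1 - α) - S ^ (1 - α)) < _
    rw [hLf, ← hs]
    refine lt_of_lt_of_le ?_ hsub
    have hp : 0 < s ^ (-α) := Real.rpow_pos_of_pos hs0 _
    rcases le_total s S with h | h
    · have e : s ^ (1 - α) = s * s ^ (-α) := by
        rw [sub_eq_add_neg, Real.rpow_add hs0, Real.rpow_one]
      have hSp : 0 < S ^ (1 - α) := Real.rpow_pos_of_pos hS0 _
      have h1 : K * (s ^ (1 - α) - S ^ (1 - α)) ≤ K * s * s ^ (-α) := by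
        rw [e]; nlinarith
      have h2 : K * s ≤ 1 / 16 := le_trans (by gcongr) hKS
      nlinarith
    · clear hLf hsub
      have h1 : s ^ (1 - α) - S ^ (1 - α) ≤ 0 := sub_nonpos.2 <|
        Real.rpow_le_rpow_of_nonpos hS0 h (by linarith)
      exact (mul_nonpos_of_nonneg_of_nonpos hK h1).trans_lt (mul_pos (by linarith) hp)
  · intro y hy T hT x hx
    obtain ⟨h0, h1, h2⟩ := hFz _ (hfar y hy x hx T hT)
    refine ⟨h0, ?_⟩
    have h := Lop_comp (a := a) (b := b) (x := x) (hsC y T) (fun x => hF1 _ (hspos y x T hT))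
      (hF2 _ (hspos y x T hT))
    rw [h1, h2] at h
    simpa using h
  · intro y hy T hT x hx
    have hy' : y ∈ closedBall z r := by
      rw [mem_ball] at hy; rw [mem_closedBall]; linarith
    obtain ⟨hl, hg⟩ := hfr x hx y hy' T
    have h := Lop_comp (a := a) (b := b) (x := x) (hsC y T) (fun x => hF1 _ (hspos y x T hT))
      (hF2 _ (hspos y x T hT))
    show Lop a b (fun x => F (quadForm M (x - y) + T)) x + _ ≤ _
    rw [h]
    refine hFle _ (hspos y x T hT) _ _ hl (gradForm_self_nonneg (hS.posdef x) _) ?_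
    have := (abs_le.1 hg).2
    nlinarith

end LocalKernels

namespace LocalKernels

variable {d : ℕ} {a : Euc d → Matrix (Fin d) (Fin d) ℝ} {b : Euc d → Euc d} {z : Euc d} {K : ℝ}

lemma Q_nonneg (k : LocalKernels a b z K) (ξ : Euc d) : 0 ≤ k.Q ξ :=
  (mul_nonneg k.m₁_pos.le (sq_nonneg _)).trans (k.Q_lower ξ)

lemma Q_sub_comm (k : LocalKernels a b z K) (x y : Euc d) : k.Q (x - y) = k.Q (y - x) := by
  rw [← k.Q_neg, neg_sub]

lemma Q_sub_le (k : LocalKernels a b z K) (x y w : Euc d) :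
    k.Q (x - w) ≤ 2 * k.Q (x - y) + 2 * k.Q (y - w) := by
  simpa using k.Q_add_le (x - y) (y - w)

lemma exists_net (k : LocalKernels a b z K) {φ : Euc d → ℝ} (hφ : Continuous φ) {A : ℝ} (hA : 0 < A)
    {E : Set (Euc d)} (hE : IsCompact E) (hφE : ∀ x ∈ E, A ≤ φ x) :
    ∃ T > 0, T ≤ k.S / 4 ∧ (∀ y ∈ E, ∀ x, k.Q (x - y) < k.Λ * T → A / 2 < φ x) ∧
      ∃ t : Finset (Euc d), (∀ y ∈ t, y ∈ E) ∧ ∀ x ∈ E, ∃ y ∈ t, k.Q (x - y) ≤ T := by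
  obtain ⟨δ, hδ, hsub⟩ := hE.exists_thickening_subset_open (isOpen_lt continuous_const hφ)
    (fun x hx => (half_lt_self hA).trans_le (hφE x hx) : E ⊆ {x | A / 2 < φ x})
  have hm₁ := k.m₁_pos
  have hm₂ := k.m₂_pos
  have hΛ := k.Λ_pos
  have hS := k.S_pos
  obtain ⟨T, hT⟩ : ∃ T, T = min (k.S / 4) (k.m₁ * δ ^ 2 / k.Λ) := ⟨_, rfl⟩
  have hT0 : 0 < T := by rw [hT]; apply lt_min <;> positivity
  have hT2 : k.Λ * T ≤ k.m₁ * δ ^ 2 := by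
    have : T ≤ k.m₁ * δ ^ 2 / k.Λ := hT ▸ min_le_right _ _
    rw [le_div_iff₀ hΛ] at this
    linarith
  refine ⟨T, hT0, hT ▸ min_le_left _ _, fun y hy x hx => ?_, ?_⟩
  · refine hsub (mem_thickening_iff.2 ⟨y, hy, ?_⟩)
    have h1 : k.m₁ * ‖x - y‖ ^ 2 < k.m₁ * δ ^ 2 := ((k.Q_lower _).trans_lt hx).trans_le hT2
    rw [dist_eq_norm]
    exact lt_of_pow_lt_pow_left₀ 2 hδ.le (lt_of_mul_lt_mul_left h1 hm₁.le)
  · obtain ⟨t, htE, htf, ht⟩ := hE.finite_cover_balls (e := Real.sqrt (T / k.m₂)) (by positivity)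
    refine ⟨htf.toFinset, fun y hy => htE (htf.mem_toFinset.1 hy), fun x hx => ?_⟩
    obtain ⟨y, hy, hxy⟩ := mem_iUnion₂.1 (ht hx)
    refine ⟨y, htf.mem_toFinset.2 hy, (k.Q_upper _).trans ?_⟩
    rw [mem_ball, dist_eq_norm] at hxy
    calc k.m₂ * ‖x - y‖ ^ 2 ≤ k.m₂ * Real.sqrt (T / k.m₂) ^ 2 := by gcongr
      _ = T := by rw [Real.sq_sqrt (by positivity)]; field_simp

/-- The total mass of the equilibrium distribution on the net is small when the supersolution
`φ` is large on the net and moderate somewhere nearby. -/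
lemma mass_le (k : LocalKernels a b z K) (hS : StandingB a b) {φ : Euc d → ℝ}
    (hφ : ContDiff ℝ 2 φ) (hpos : ∀ x, 0 < φ x)
    (hsup : ∀ y ∈ closedBall z 1, Lop a b φ y ≤ K * φ y) {H : ℝ} (hH : 0 < H)
    {x₁ : Euc d} (hx₁ : x₁ ∈ ball z k.ρ) (hφx₁ : φ x₁ ≤ H) {A T e C : ℝ} (hA : 0 < A) (hT : 0 < T)
    (hTS : T ≤ k.S / 4) (he : 0 < e) (hC : 0 ≤ C) (hinterp : ∀ t > 0, t ^ k.p ≤ e * t ^ (-k.β) + C)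
    (hAC : 4 * H * C ≤ A * k.lowSub)
    {ι : Type} [Fintype ι] {y : ι → Euc d} (hy : ∀ i, y i ∈ ball z k.ρ)
    (hnear : ∀ i x, k.Q (x - y i) < k.Λ * T → A / 2 < φ x) {c : ι → ℝ} (hc : ∀ i, 0 ≤ c i)
    (hc1 : ∀ i, 0 < c i → ∑ j, (k.Q (y i - y j) + T) ^ (-k.β) * c j ≤ 1) :
    A * ∑ i, c i ≤ 4 * H * e * (2 * k.Λ + 2) ^ k.β / k.lowSub := by
  have hΛ := k.Λ_pos
  obtain ⟨N, hN⟩ : ∃ N, N = 2 * k.Λ + 2 := ⟨_, rfl⟩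
  have hN1 : 1 < N := by linarith
  obtain ⟨γ, hγ⟩ : ∃ γ, γ = ∑ i, c i := ⟨_, rfl⟩
  have hγ0 : 0 ≤ γ := by rw [hγ]; exact Finset.sum_nonneg fun i _ => hc i
  obtain ⟨σ, hσ⟩ : ∃ σ, σ = e * N ^ k.β + C * γ := ⟨_, rfl⟩
  have hNβ : 0 < N ^ k.β := by positivity
  have hσ0 : 0 ≤ σ := by rw [hσ]; positivity
  have hspos : ∀ i x, 0 < k.Q (x - y i) + T := fun i x =>
    add_pos_of_nonneg_of_pos (k.Q_nonneg _) hT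
  have hfC : ∀ i, ContDiff ℝ 2 fun x => c i * k.sub (y i) T x := fun i =>
    contDiff_const.mul (k.sub_contDiff _ T hT)
  have hu : ∀ x, ∑ i, c i * k.sub (y i) T x ≤ 2 * σ / A * φ x := by
    refine comparison (K := K) hS hφ hpos (ContDiff.sum fun i _ => hfC i)
      (isCompact_closedBall z k.r) (fun x hx => Finset.sum_nonpos fun i _ => ?_) (by positivity)
      (fun x hx => hsup x (closedBall_subset_closedBall k.r_le hx)) ?_
    · exact mul_nonpos_of_nonneg_of_nonpos (hc i) (k.sub_nonpos _ (hy i) T hT x hx)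
    intro x hx hupos hlt
    have hcase : ∀ i, 0 < c i → k.Λ * T ≤ k.Q (x - y i) + T := by
      intro i hi
      by_contra! hcon
      have hφx : A / 2 < φ x := hnear i x (by linarith)
      have h1 : σ ≤ 2 * σ / A * φ x := by
        calc σ = 2 * σ / A * (A / 2) := by field_simp
          _ ≤ _ := by gcongr
      have h2 : ∑ i, c i * k.sub (y i) T x ≤ σ := by
        calc ∑ j, c j * k.sub (y j) T x
            ≤ ∑ j, (e * N ^ k.β * ((k.Q (y i - y j) + T) ^ (-k.β) * c j) + C * c j) := by
              refine Finset.sum_le_sum fun j _ => ?_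
              have hj := hspos j x
              have h3 := k.sub_le (y j) T hT x
              have h4 := hinterp _ hj
              have h5 : (k.Q (x - y j) + T) ^ (-k.β)
                  ≤ N ^ k.β * (k.Q (y i - y j) + T) ^ (-k.β) := by
                have h6 := k.Q_sub_le (y i) x (y j)
                rw [k.Q_sub_comm (y i) x] at h6
                have h7 : k.Q (y i - y j) + T ≤ N * (k.Q (x - y j) + T) := by
                  rw [hN]; nlinarith [k.Q_nonneg (x - y j)]
                have h8 := Real.rpow_le_rpow_of_nonpos (hspos j (y i)) h7
                  (neg_nonpos.2 k.β_pos.le)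
                rw [Real.mul_rpow (by positivity) hj.le, Real.rpow_neg (by positivity),
                  inv_mul_le_iff₀ hNβ] at h8
                exact h8
              have h9 : k.sub (y j) T x ≤ e * (N ^ k.β * (k.Q (y i - y j) + T) ^ (-k.β)) + C := by
                have := mul_le_mul_of_nonneg_left h5 he.le
                linarith
              calc c j * k.sub (y j) T x
                  ≤ c j * (e * (N ^ k.β * (k.Q (y i - y j) + T) ^ (-k.β)) + C) :=
                    mul_le_mul_of_nonneg_left h9 (hc j)
                _ = _ := by ring
          _ = e * N ^ k.β * ∑ j, (k.Q (y i - y j) + T) ^ (-k.β) * c j + C * γ := by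
              rw [Finset.sum_add_distrib, ← Finset.mul_sum, ← Finset.mul_sum, hγ]
          _ ≤ σ := by
              rw [hσ]
              have := mul_le_mul_of_nonneg_left (hc1 i hi) (mul_pos he hNβ).le
              linarith
      linarith
    rw [Lop_sum _ _ hfC]
    simp only [Finset.mul_sum]
    obtain ⟨i₀, hi₀⟩ : ∃ i, 0 < c i := by
      by_contra! hcon
      have : ∀ i, c i = 0 := fun i => le_antisymm (hcon i) (hc i)
      simp [this] at hupos
    have hLi : ∀ i, Lop a b (fun x => c i * k.sub (y i) T x) x = c i * Lop a b (k.sub (y i) T) x :=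
      fun i => Lop_const_mul (k.sub_contDiff _ T hT) (c i)
    have hlti : ∀ i, 0 < c i → K * (c i * k.sub (y i) T x)
        < Lop a b (fun x => c i * k.sub (y i) T x) x := fun i hi => by
      rw [hLi, mul_left_comm]
      exact mul_lt_mul_of_pos_left (k.sub_lt _ (hy i) T hT x hx (hcase i hi)) hi
    refine Finset.sum_lt_sum (fun i _ => ?_) ⟨i₀, Finset.mem_univ _, hlti i₀ hi₀⟩
    rcases (hc i).eq_or_lt with h | h
    · rw [hLi, ← h]; simp
    · exact (hlti i h).le
  have h1 : k.lowSub * γ ≤ 2 * σ / A * H := by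
    calc k.lowSub * γ = ∑ i, c i * k.lowSub := by rw [hγ, Finset.mul_sum]; simp only [mul_comm]
      _ ≤ ∑ i, c i * k.sub (y i) T x₁ := Finset.sum_le_sum fun i _ =>
          mul_le_mul_of_nonneg_left (k.sub_lower _ (hy i) T hT hTS x₁ hx₁) (hc i)
      _ ≤ 2 * σ / A * φ x₁ := hu x₁
      _ ≤ _ := by gcongr
  rw [← hγ, ← hN, le_div_iff₀ k.lowSub_pos]
  have h2 : A * (k.lowSub * γ) ≤ 2 * σ * H := by
    calc A * (k.lowSub * γ) ≤ A * (2 * σ / A * H) := by gcongr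
      _ = 2 * σ * H := by field_simp
  rw [hσ] at h2
  have h3 := mul_le_mul_of_nonneg_right hAC hγ0
  nlinarith

/-- A compactly supported corrector which is very superharmonic on a set where a supersolution is
large, and almost superharmonic everywhere. -/
lemma exists_corrector (k : LocalKernels a b z K) (hS : StandingB a b) {ε H : ℝ} (hε : 0 < ε)
    (hH : 0 < H) : ∃ A₀ > 0, ∀ φ : Euc d → ℝ, ContDiff ℝ 2 φ → (∀ x, 0 < φ x) →
      (∀ y ∈ closedBall z 1, Lop a b φ y ≤ K * φ y) → (∃ x ∈ ball z k.ρ, φ x ≤ H) →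
      ∀ A ≥ A₀, ∀ E, IsCompact E → E ⊆ ball z k.ρ → (∀ x ∈ E, A ≤ φ x) →
      ∃ v : Euc d → ℝ, ContDiff ℝ 2 v ∧ (∀ x, 0 ≤ v x) ∧
        (∀ x ∉ ball z 1, v x = 0 ∧ Lop a b v x = 0) ∧
        (∀ x, Lop a b v x + K * v x ≤ ε) ∧ ∀ x ∈ E, Lop a b v x + K * v x ≤ -A + ε := by
  have hΛ := k.Λ_pos
  have hl := k.lowSub_pos
  have hc₀ := k.lowSuper_pos
  obtain ⟨N, hN⟩ : ∃ N, N = 2 * k.Λ + 2 := ⟨_, rfl⟩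
  have hN0 : 0 < N := by linarith
  obtain ⟨C₂, hC₂⟩ : ∃ C₂, C₂ = 3 ^ k.β * k.highSuper / k.lowSuper := ⟨_, rfl⟩
  have hC₂0 : 0 ≤ C₂ := by
    rw [hC₂]; exact div_nonneg (mul_nonneg (by positivity) k.highSuper_nonneg) hc₀.le
  obtain ⟨e, he⟩ : ∃ e, e = ε * k.lowSub / (4 * H * N ^ k.β * (C₂ + 1)) := ⟨_, rfl⟩
  have he0 : 0 < e := by rw [he]; positivity
  obtain ⟨C, hC, hinterp⟩ := exists_rpow_interpolation k.p_neg k.β_lt he0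
  refine ⟨max 1 (4 * H * C / k.lowSub), by positivity, ?_⟩
  intro φ hφ hpos hsup ⟨x₁, hx₁, hφx₁⟩ A hA E hE hEρ hφE
  have hA1 : 1 ≤ A := (le_max_left _ _).trans hA
  have hA0 : 0 < A := by linarith
  have hAC : 4 * H * C ≤ A * k.lowSub := (div_le_iff₀ hl).1 ((le_max_right _ _).trans hA)
  obtain ⟨T, hT, hTS, hnear, t, htE, htcov⟩ := k.exists_net hφ.continuous hA0 hE hφE
  have hspos : ∀ x w, 0 < k.Q (x - w) + T := fun x w => add_pos_of_nonneg_of_pos (k.Q_nonneg _) hT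
  obtain ⟨c, hc, hc1, hc2⟩ := exists_equilibrium
    (κ := fun i j : Fin t.card => (k.Q ((t.equivFin.symm i : Euc d) - t.equivFin.symm j) + T)
      ^ (-k.β))
    (fun i j => by rw [k.Q_sub_comm]) (fun i j => (Real.rpow_pos_of_pos (hspos _ _) _).le)
    (fun i => Real.rpow_pos_of_pos (hspos _ _) _)
  obtain ⟨y, hy⟩ : ∃ y : Fin t.card → Euc d, y = fun i => (t.equivFin.symm i : Euc d) := ⟨_, rfl⟩
  have hyi : ∀ i, (t.equivFin.symm i : Euc d) = y i := fun i => by rw [hy]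
  simp only [hyi] at hc1 hc2
  have hyE : ∀ i, y i ∈ E := fun i => by rw [← hyi]; exact htE _ (t.equivFin.symm i).2
  have hyρ : ∀ i, y i ∈ ball z k.ρ := fun i => hEρ (hyE i)
  have hmass := k.mass_le hS hφ hpos hsup hH hx₁ hφx₁ hA0 hT hTS he0 hC hinterp hAC hyρ
    (fun i x => hnear _ (hyE i) x) hc hc2
  obtain ⟨γ, hγ⟩ : ∃ γ, γ = ∑ i, c i := ⟨_, rfl⟩
  have hγ0 : 0 ≤ γ := by rw [hγ]; exact Finset.sum_nonneg fun i _ => hc i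
  have hmass' : C₂ * (A * γ) ≤ ε := by
    have e1 : 4 * H * e * (2 * k.Λ + 2) ^ k.β / k.lowSub = ε / (C₂ + 1) := by
      rw [← hN, he]; field_simp
    rw [e1, ← hγ, le_div_iff₀ (by positivity)] at hmass
    nlinarith [mul_nonneg hA0.le hγ0]
  obtain ⟨B, hB⟩ : ∃ B, B = A * 3 ^ k.β / k.lowSuper := ⟨_, rfl⟩
  have hB0 : 0 ≤ B := by rw [hB]; positivity
  have hgC : ∀ i, ContDiff ℝ 2 fun x => B * c i * k.super (y i) T x := fun i =>
    contDiff_const.mul (k.super_contDiff _ T hT)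
  have hLv : ∀ x, Lop a b (fun x => ∑ i, B * c i * k.super (y i) T x) x
      = ∑ i, B * c i * Lop a b (k.super (y i) T) x := fun x => by
    rw [Lop_sum _ _ hgC]
    exact Finset.sum_congr rfl fun i _ => Lop_const_mul (k.super_contDiff _ T hT) _
  have hoff : ∀ x ∉ ball z k.r, ∑ i, B * c i * k.super (y i) T x = 0 ∧
      Lop a b (fun x => ∑ i, B * c i * k.super (y i) T x) x = 0 := fun x hx => by
    rw [hLv]
    refine ⟨Finset.sum_eq_zero fun i _ => ?_, Finset.sum_eq_zero fun i _ => ?_⟩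
    · rw [(k.super_eq_zero _ (hyρ i) T hT x hx).1, mul_zero]
    · rw [(k.super_eq_zero _ (hyρ i) T hT x hx).2, mul_zero]
  have hmain : ∀ x ∈ closedBall z k.r, Lop a b (fun x => ∑ i, B * c i * k.super (y i) T x) x
      + K * ∑ i, B * c i * k.super (y i) T x
      ≤ -(A * 3 ^ k.β * ∑ i, (k.Q (x - y i) + T) ^ (-k.β) * c i) + ε := fun x hx => by
    rw [hLv, Finset.mul_sum, ← Finset.sum_add_distrib]
    calc ∑ i, (B * c i * Lop a b (k.super (y i) T) x + K * (B * c i * k.super (y i) T x))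
        ≤ ∑ i, (-(A * 3 ^ k.β) * ((k.Q (x - y i) + T) ^ (-k.β) * c i) + C₂ * A * c i) := by
          refine Finset.sum_le_sum fun i _ => ?_
          have h := mul_le_mul_of_nonneg_left (k.super_le _ (hyρ i) T hT x hx)
            (mul_nonneg hB0 (hc i))
          calc _ = B * c i * (Lop a b (k.super (y i) T) x + K * k.super (y i) T x) := by ring
            _ ≤ _ := h
            _ = _ := by rw [hB, hC₂]; field_simp
      _ = -(A * 3 ^ k.β * ∑ i, (k.Q (x - y i) + T) ^ (-k.β) * c i) + C₂ * (A * γ) := by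
          rw [Finset.sum_add_distrib, ← Finset.mul_sum, ← Finset.mul_sum, hγ]; ring
      _ ≤ _ := by gcongr
  refine ⟨fun x => ∑ i, B * c i * k.super (y i) T x, ContDiff.sum fun i _ => hgC i,
    fun x => Finset.sum_nonneg fun i _ => mul_nonneg (mul_nonneg hB0 (hc i))
      (k.super_nonneg _ T hT x),
    fun x hx => hoff x fun h => hx (ball_subset_ball k.r_le h), fun x => ?_, fun x hx => ?_⟩
  · by_cases hx : x ∈ ball z k.r
    · refine (hmain x (ball_subset_closedBall hx)).trans (add_le_of_nonpos_left
        (neg_nonpos.2 (mul_nonneg (by positivity) (Finset.sum_nonneg fun i _ =>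
          mul_nonneg (Real.rpow_pos_of_pos (hspos _ _) _).le (hc i)))))
    · show _ + K * (∑ i, B * c i * k.super (y i) T x) ≤ _
      rw [(hoff x hx).1, (hoff x hx).2]; simpa using hε.le
  · refine (hmain x (ball_subset_closedBall (ball_subset_ball k.ρ_le (hEρ hx)))).trans ?_
    obtain ⟨w, hwt, hw⟩ := htcov x hx
    obtain ⟨i, hi⟩ : ∃ i, y i = w := ⟨t.equivFin ⟨w, hwt⟩, by rw [← hyi]; simp⟩
    rw [← hi] at hw
    have h1 : 1 ≤ 3 ^ k.β * ∑ j, (k.Q (x - y j) + T) ^ (-k.β) * c j := by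
      refine (hc1 i).trans ?_
      rw [Finset.mul_sum]
      refine Finset.sum_le_sum fun j _ => ?_
      rw [← mul_assoc]
      refine mul_le_mul_of_nonneg_right ?_ (hc j)
      have h2 := k.Q_sub_le x (y i) (y j)
      have h3 : k.Q (x - y j) + T ≤ 3 * (k.Q (y i - y j) + T) := by
        linarith [k.Q_nonneg (y i - y j)]
      have h4 := Real.rpow_le_rpow_of_nonpos (hspos x (y j)) h3 (neg_nonpos.2 k.β_pos.le)
      rw [Real.mul_rpow (by positivity) (hspos _ _).le, Real.rpow_neg (by positivity),
        inv_mul_le_iff₀ (by positivity)] at h4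
      exact h4
    nlinarith

end LocalKernels

section Corrector

variable {d : ℕ} {a : Euc d → Matrix (Fin d) (Fin d) ℝ} {b : Euc d → Euc d}

lemma IsCompact.exists_pos_lower_bound {X : Type*} [TopologicalSpace X] {D : Set X}
    (hD : IsCompact D) {f : X → ℝ} (hf : ContinuousOn f D) (hpos : ∀ x ∈ D, 0 < f x) :
    ∃ m > 0, ∀ x ∈ D, m ≤ f x := by
  rcases D.eq_empty_or_nonempty with rfl | hne
  · exact ⟨1, one_pos, by simp⟩
  · obtain ⟨x, hx, hmin⟩ := hD.exists_isMinOn hne hf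
    exact ⟨f x, hpos x hx, fun y hy => hmin hy⟩

/-- A weak Harnack inequality: a supersolution which is at most `1` somewhere on `D` is bounded
by a universal constant somewhere on each given ball. -/
lemma StandingB.exists_moderate_point (hS : StandingB a b) (y : Euc d) {ρ R K : ℝ} (hρ : 0 < ρ)
    (hρR : ρ ≤ R) (hK : 0 ≤ K) {D : Set (Euc d)} (hD : IsCompact D) (hDR : D ⊆ ball y R) :
    ∃ H > 0, ∀ φ : Euc d → ℝ, ContDiff ℝ 2 φ → (∀ x, 0 < φ x) →
      (∀ x ∈ closedBall y R, Lop a b φ x ≤ K * φ x) → (∃ x ∈ D, φ x ≤ 1) →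
      ∃ x ∈ ball y ρ, φ x ≤ H := by
  obtain ⟨w, hw⟩ := hS.exists_barrier y (half_pos hρ) (by linarith : ρ / 2 < R) hK
  obtain ⟨μ, hμ, hμw⟩ := hD.exists_pos_lower_bound hw.contDiff.continuous.continuousOn
    fun x hx => hw.pos x (hDR hx)
  refine ⟨2 / μ, by positivity, fun φ hφ hpos hsup ⟨x, hxD, hx⟩ => ?_⟩
  by_contra! hcon
  have h1 := IsBarrier.mul_le hS hw hφ hpos hsup (m := 2 / μ) (by positivity)
    (fun p hp => (hcon p (closedBall_subset_ball (half_lt_self hρ) hp)).le) x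
  have h2 : 2 / μ * μ ≤ 2 / μ * w x := by gcongr; exact hμw x hxD
  rw [div_mul_cancel₀ _ hμ.ne'] at h2
  linarith

/-- A compactly supported corrector for the superlevel sets of supersolutions in a ball. -/
lemma StandingB.exists_corrector (hS : StandingB a b) (hd : 1 ≤ d) {z : Euc d} {r R K ε : ℝ}
    (hR : 1 ≤ R) (hK : 0 ≤ K) {D : Set (Euc d)} (hD : IsCompact D)
    (hDR : ∀ y ∈ closedBall z r, D ⊆ ball y R) (hε : 0 < ε) :
    ∃ A₀ > 0, ∀ φ : Euc d → ℝ, ContDiff ℝ 2 φ → (∀ x, 0 < φ x) →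
      (∀ x ∈ closedBall z (r + R), Lop a b φ x ≤ K * φ x) → (∃ x ∈ D, φ x ≤ 1) →
      ∀ A ≥ A₀, ∀ E, IsCompact E → E ⊆ closedBall z r → (∀ x ∈ E, A ≤ φ x) →
      ∃ v : Euc d → ℝ, ContDiff ℝ 2 v ∧ (∀ x, 0 ≤ v x) ∧
        (∀ x ∉ closedBall z (r + 1), v x = 0 ∧ Lop a b v x = 0) ∧
        (∀ x, Lop a b v x + K * v x ≤ ε) ∧ ∀ x ∈ E, Lop a b v x + K * v x ≤ -A + ε := by
  have k : ∀ y, LocalKernels a b y K := fun y => (hS.nonempty_localKernels hd y hK).some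
  obtain ⟨t, ht, hcov⟩ := (isCompact_closedBall z r).elim_nhds_subcover
    (fun y => ball y ((k y).ρ / 2)) fun y _ => ball_mem_nhds y (half_pos (k y).ρ_pos)
  obtain ⟨ε', hε'⟩ : ∃ ε', ε' = ε / (t.card + 1) := ⟨_, rfl⟩
  have hε'0 : 0 < ε' := by rw [hε']; positivity
  have hcard : t.card * ε' ≤ ε := by
    rw [hε', mul_div_assoc', div_le_iff₀ (by positivity)]
    nlinarith
  have hloc : ∀ y : t, ∃ H > 0, ∀ φ : Euc d → ℝ, ContDiff ℝ 2 φ → (∀ x, 0 < φ x) →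
      (∀ x ∈ closedBall (y : Euc d) R, Lop a b φ x ≤ K * φ x) → (∃ x ∈ D, φ x ≤ 1) →
      ∃ x ∈ ball (y : Euc d) (k y).ρ, φ x ≤ H := fun y =>
    hS.exists_moderate_point y (k y).ρ_pos ((((k y).ρ_le).trans (k y).r_le).trans hR) hK hD
      (hDR y (ht y y.2))
  choose H hH hmod using hloc
  choose A₀ hA₀ hcorr using fun y : t => (k y).exists_corrector hS hε'0 (hH y)
  refine ⟨1 + ∑ y, A₀ y, by
    have := Finset.sum_nonneg fun (y : t) (_ : y ∈ Finset.univ) => (hA₀ y).le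
    positivity, ?_⟩
  intro φ hφ hpos hsup hφD A hA E hE hEX hφE
  have hsub : ∀ y : t, ∀ s ≤ R, closedBall (y : Euc d) s ⊆ closedBall z (r + R) := fun y s hs =>
    closedBall_subset_closedBall' (by
      have := mem_closedBall.1 (ht y y.2)
      linarith)
  have hAy : ∀ y, A₀ y ≤ A := fun y => by
    have := Finset.single_le_sum (f := A₀) (fun y _ => (hA₀ y).le) (Finset.mem_univ y)
    linarith
  choose v hvC hv0 hvoff hvle hvE using fun y : t =>
    hcorr y φ hφ hpos (fun x hx => hsup x (hsub y 1 hR hx))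
      (hmod y φ hφ hpos (fun x hx => hsup x (hsub y R le_rfl hx)) hφD) A (hAy y)
      (E ∩ closedBall (y : Euc d) ((k y).ρ / 2)) (hE.inter_right isClosed_closedBall)
      (inter_subset_right.trans (closedBall_subset_ball (half_lt_self (k y).ρ_pos)))
      fun x hx => hφE x hx.1
  have hL : ∀ x, Lop a b (fun x => ∑ y, v y x) x + K * ∑ y, v y x
      = ∑ y, (Lop a b (v y) x + K * v y x) := fun x => by
    rw [Lop_sum _ _ hvC, Finset.mul_sum, Finset.sum_add_distrib]
  have htc : ∑ _y : t, ε' = t.card * ε' := by simp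
  refine ⟨fun x => ∑ y, v y x, ContDiff.sum fun y _ => hvC y,
    fun x => Finset.sum_nonneg fun y _ => hv0 y x, fun x hx => ?_, fun x => ?_, fun x hx => ?_⟩
  · have hxy : ∀ y : t, x ∉ ball (y : Euc d) 1 := fun y h => hx <| by
      have h1 := mem_closedBall.1 (ht y y.2)
      have h2 := mem_ball.1 h
      exact mem_closedBall.2 (by linarith [dist_triangle x y z])
    rw [Lop_sum _ _ hvC]
    exact ⟨Finset.sum_eq_zero fun y _ => (hvoff y x (hxy y)).1,
      Finset.sum_eq_zero fun y _ => (hvoff y x (hxy y)).2⟩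
  · rw [hL]
    exact ((Finset.sum_le_sum fun y _ => hvle y x).trans_eq htc).trans hcard
  · rw [hL]
    obtain ⟨y, hyt, hxy⟩ := mem_iUnion₂.1 (hcov (hEX hx))
    have h1 := hvE ⟨y, hyt⟩ x ⟨hx, ball_subset_closedBall hxy⟩
    have h2 : ∑ y : t, (ε' - (Lop a b (v y) x + K * v y x)) ≥ A := by
      refine le_trans ?_ (Finset.single_le_sum (f := fun y : t => ε' - (Lop a b (v y) x + K * v y x))
        (fun y _ => sub_nonneg.2 (hvle y x)) (Finset.mem_univ ⟨y, hyt⟩))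
      linarith
    rw [Finset.sum_sub_distrib, htc] at h2
    linarith

end Corrector

section Truncation

variable {d : ℕ} {a : Euc d → Matrix (Fin d) (Fin d) ℝ} {b : Euc d → Euc d}

/-- A smooth version of `min φ (A ψ)` which behaves like a supersolution. -/
lemma exists_truncation (ha : ∀ x, (a x).PosDef) {φ ψ : Euc d → ℝ} (hφ : ContDiff ℝ 2 φ)
    (hφ0 : ∀ x, 0 < φ x) (hψ : ContDiff ℝ 2 ψ) (hψ0 : ∀ x, 0 < ψ x) {A : ℝ} (hA : 0 < A) :
    ∃ G : Euc d → ℝ, ContDiff ℝ 2 G ∧ (∀ x, min (φ x) (A * ψ x) ≤ G x) ∧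
      (∀ x, G x ≤ 2 * (A * ψ x)) ∧
      ∀ x p q, Lop a b φ x ≤ p * φ x → Lop a b ψ x ≤ q * ψ x →
        ∃ P Q, 0 ≤ P ∧ 0 ≤ Q ∧ P + Q = G x ∧ Q ≤ 2 * (A * ψ x) ∧ (φ x ≤ A * ψ x → Q = 0) ∧
          Lop a b G x ≤ p * P + q * Q := by
  have hg : ∀ t, HasDerivAt (fun t => t - convexRamp t) (1 - convexRamp₁ t) t := fun t =>
    (hasDerivAt_id t).sub (hasDerivAt_convexRamp t)
  have hg₁ : ∀ t, HasDerivAt (fun t => 1 - convexRamp₁ t) (-convexRamp₂ t) t := fun t => by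
    simpa using (hasDerivAt_convexRamp₁ t).const_sub 1
  have hgC : ContDiff ℝ 2 fun t : ℝ => t - convexRamp t := contDiff_id.sub contDiff_convexRamp
  have hψA : ContDiff ℝ 2 fun x => A * ψ x := contDiff_const.mul hψ
  have hψA0 : ∀ x, 0 < A * ψ x := fun x => mul_pos hA (hψ0 x)
  refine ⟨fun x => A * ψ x * (φ x / (A * ψ x) - convexRamp (φ x / (A * ψ x))),
    hψA.mul (hgC.comp (hφ.div hψA fun x => (hψA0 x).ne')), fun x => ?_, fun x => ?_, ?_⟩
  · have hp := hψA0 x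
    obtain ⟨t, ht⟩ : ∃ t, t = φ x / (A * ψ x) := ⟨_, rfl⟩
    have e : φ x = A * ψ x * t := by rw [ht, mul_div_cancel₀ _ ‹0 < A * ψ x›.ne']
    obtain ⟨-, -, -, -, -, -, -, h, -, -⟩ := convexRamp_bounds t
    show _ ≤ A * ψ x * (φ x / (A * ψ x) - convexRamp (φ x / (A * ψ x)))
    rw [← ht, e]
    rcases le_total t 1 with h1 | h1
    · rw [max_eq_right (by linarith)] at h
      exact (min_le_left _ _).trans (by gcongr; linarith)
    · rw [max_eq_left (by linarith)] at h
      exact (min_le_right _ _).trans (le_mul_of_one_le_right hp.le (by linarith))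
  · have hp := hψA0 x
    obtain ⟨-, -, -, -, -, -, h, -, -, -⟩ := convexRamp_bounds (φ x / (A * ψ x))
    nlinarith
  intro x p q hp hq
  have hpos := hψA0 x
  obtain ⟨t, ht⟩ : ∃ t, t = φ x / (A * ψ x) := ⟨_, rfl⟩
  have e : φ x = A * ψ x * t := by rw [ht, mul_div_cancel₀ _ ‹0 < A * ψ x›.ne']
  have hpersp := Lop_perspective_le (b := b) (ha x) hφ hψA hψA0 hgC hg (hg₁ (φ x / (A * ψ x)))
    (neg_nonpos.2 (convexRamp_bounds _).1)
  rw [← ht, Lop_const_mul hψ] at hpersp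
  obtain ⟨-, -, h3, h4, -, -, -, -, h9, h10⟩ := convexRamp_bounds t
  refine ⟨(1 - convexRamp₁ t) * φ x, (t * convexRamp₁ t - convexRamp t) * (A * ψ x),
    mul_nonneg (by linarith) (hφ0 x).le, mul_nonneg (by linarith) hpos.le, ?_, ?_, ?_, ?_⟩
  · show _ = A * ψ x * (φ x / (A * ψ x) - convexRamp (φ x / (A * ψ x)))
    rw [← ht, e]; ring
  · exact mul_le_mul_of_nonneg_right (by linarith) hpos.le
  · intro hle
    have ht1 : t ≤ 1 := by rw [ht, div_le_one hpos]; exact hle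
    obtain ⟨e0, e1, -⟩ := convexRamp_of_le ht1
    rw [e0, e1]; ring
  · refine hpersp.trans ?_
    have h1 := mul_le_mul_of_nonneg_left hp (by linarith : 0 ≤ 1 - convexRamp₁ t)
    have h2 := mul_le_mul_of_nonneg_left hq
      (mul_nonneg (by linarith : 0 ≤ t * convexRamp₁ t - convexRamp t) hA.le)
    nlinarith

end Truncation

section Merging

variable {d : ℕ} {a : Euc d → Matrix (Fin d) (Fin d) ℝ} {b : Euc d → Euc d}

lemma exists_normalized {φ U : Euc d → ℝ} (hφ : ContDiff ℝ 2 φ) (hpos : ∀ x, 0 < φ x)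
    (hsup : ∀ x, Lop a b φ x ≤ U x * φ x) {D : Set (Euc d)} (hD : IsCompact D) (hne : D.Nonempty) :
    ∃ φ' : Euc d → ℝ, ContDiff ℝ 2 φ' ∧ (∀ x, 0 < φ' x) ∧ (∀ x, Lop a b φ' x ≤ U x * φ' x) ∧
      (∀ x ∈ D, 1 ≤ φ' x) ∧ ∃ x ∈ D, φ' x ≤ 1 := by
  obtain ⟨p, hp, hmin⟩ := hD.exists_isMinOn hne hφ.continuous.continuousOn
  have hp0 := hpos p
  refine ⟨fun x => (φ p)⁻¹ * φ x, contDiff_const.mul hφ, fun x => mul_pos (inv_pos.2 hp0) (hpos x),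
    fun x => ?_, fun x hx => ?_, p, hp, (inv_mul_cancel₀ hp0.ne').le⟩
  · rw [Lop_const_mul hφ, mul_left_comm]
    exact mul_le_mul_of_nonneg_left (hsup x) (inv_pos.2 hp0).le
  · rw [← inv_mul_cancel₀ hp0.ne']
    exact mul_le_mul_of_nonneg_left (hmin hx) (inv_pos.2 hp0).le

lemma IsBarrier.potential_nonneg {p : Euc d} {r R K : ℝ} {w : Euc d → ℝ}
    (hw : IsBarrier a b p r R K w) {W : Euc d → ℝ} (hW : ∀ x ∈ ball p R, -K ≤ W x) {x : Euc d}
    (hx : r ≤ dist x p) : 0 ≤ Lop a b w x + W x * w x := by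
  by_cases h : x ∈ ball p R
  · obtain ⟨c, hc, hle⟩ := hw.strict (dist x p) (mem_ball.1 h)
    have h1 := hle x hx le_rfl
    have h2 := mul_le_mul_of_nonneg_right (hW x h) (hw.nonneg x)
    linarith
  · simp [hw.eq_zero x h]

set_option maxHeartbeats 2000000 in
/-- Merging a strict supersolution of `𝓛 + W - δ 1_B` with almost supersolutions of
`𝓛 + W + h` into a strict supersolution of `𝓛 + W`. -/
lemma StandingB.exists_strict_supersolution (hS : StandingB a b) (hd : 1 ≤ d) {W ψ h : Euc d → ℝ}
    (hW : ∀ R > 0, ∃ C, ∀ x : Euc d, ‖x‖ ≤ R → |W x| ≤ C) (hψ : ContDiff ℝ 2 ψ)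
    (hψ0 : ∀ x, 0 < ψ x) {η δ : ℝ} (hη : 0 < η) (hδ : 0 < δ) {z : Euc d} {r : ℝ} (hr : 0 < r)
    (hψsup : ∀ x, Lop a b ψ x ≤ ((ball z r).indicator (fun _ => δ) x - η - W x) * ψ x)
    (hh : Continuous h) (hh0 : ∀ x, 0 ≤ h x) {x₀ : Euc d} (hx₀ : h x₀ ≠ 0)
    (happrox : ∀ κ > 0, ∃ φ : Euc d → ℝ, ContDiff ℝ 2 φ ∧ (∀ x, 0 < φ x) ∧
      ∀ x, Lop a b φ x ≤ (κ - W x - h x) * φ x) :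
    ∃ Φ : Euc d → ℝ, ContDiff ℝ 2 Φ ∧ (∀ x, 0 < Φ x) ∧
      ∃ η' > 0, ∀ x, Lop a b Φ x + W x * Φ x ≤ -η' * Φ x := by
  have hhx : h x₀ / 2 < h x₀ := half_lt_self ((hh0 x₀).lt_of_ne' hx₀)
  obtain ⟨r', hr'0, hr'⟩ := Metric.isOpen_iff.1 (isOpen_lt continuous_const hh) x₀ hhx
  obtain ⟨r₀, hr₀⟩ : ∃ r₀, r₀ = min (r' / 2) 1 := ⟨_, rfl⟩
  have hr₀0 : 0 < r₀ := by rw [hr₀]; positivity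
  have hr₀1 : r₀ ≤ 1 := hr₀ ▸ min_le_right _ _
  have hr₀r' : r₀ < r' := (hr₀ ▸ min_le_left _ _ : r₀ ≤ r' / 2).trans_lt (half_lt_self hr'0)
  have hhD : ∀ x ∈ closedBall x₀ r₀, h x₀ / 2 ≤ h x := fun x hx =>
    (hr' (closedBall_subset_ball hr₀r' hx)).le
  obtain ⟨m, hm⟩ : ∃ m, m = min (h x₀ / 2) η := ⟨_, rfl⟩
  have hm0 : 0 < m := by
    rw [hm]; exact lt_min (half_pos ((hh0 x₀).lt_of_ne' hx₀)) hη
  have hmh : m ≤ h x₀ / 2 := hm ▸ min_le_left _ _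
  have hmη : m ≤ η := hm ▸ min_le_right _ _
  -- the geometry
  have hdist : 0 ≤ dist x₀ z := dist_nonneg
  obtain ⟨R, hR⟩ : ∃ R, R = dist x₀ z + r + 3 := ⟨_, rfl⟩
  obtain ⟨C₀, hC₀⟩ := hW (‖x₀‖ + ‖z‖ + r + R) (by
    rw [hR]; positivity)
  obtain ⟨K, hK⟩ : ∃ K, K = |C₀| + 1 := ⟨_, rfl⟩
  have hK0 : 0 ≤ K := by rw [hK]; positivity
  have hWK : ∀ x : Euc d, ‖x‖ ≤ ‖x₀‖ + ‖z‖ + r + R → |W x| + 1 ≤ K := fun x hx => by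
    rw [hK]; linarith [hC₀ x hx, le_abs_self C₀]
  have hreg₀ : ∀ x ∈ closedBall x₀ R, |W x| + 1 ≤ K := fun x hx => hWK x (by
    have h1 : ‖x‖ ≤ ‖x - x₀‖ + ‖x₀‖ := by simpa using norm_add_le (x - x₀) x₀
    rw [mem_closedBall, dist_eq_norm] at hx
    linarith [norm_nonneg z])
  have hregz : ∀ x ∈ closedBall z (r + R), |W x| + 1 ≤ K := fun x hx => hWK x (by
    have h1 : ‖x‖ ≤ ‖x - z‖ + ‖z‖ := by simpa using norm_add_le (x - z) z
    rw [mem_closedBall, dist_eq_norm] at hx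
    linarith [norm_nonneg x₀])
  have hDR : ∀ y ∈ closedBall z r, closedBall x₀ r₀ ⊆ ball y R := fun y hy x hx => by
    rw [mem_closedBall] at hx hy
    rw [mem_ball]
    have h1 := dist_triangle x x₀ y
    have h2 := dist_triangle_right x₀ y z
    linarith
  -- the barrier
  obtain ⟨w, hw⟩ := hS.exists_barrier x₀ hr₀0 (by linarith : r₀ < R) hK0
  obtain ⟨c, hc0, hc⟩ := hw.strict (dist x₀ z + r + 1) (by linarith)
  obtain ⟨C₁, hC₁0, hC₁⟩ := hS.Lop_bounded hw.contDiff (‖x₀‖ + ‖z‖ + r + R)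
  have hwD : ∀ x ∈ closedBall x₀ R, -(Lop a b w x + W x * w x) ≤ C₁ + K := fun x hx => by
    have h1 := hC₁ x (by
      have h1 : ‖x‖ ≤ ‖x - x₀‖ + ‖x₀‖ := by simpa using norm_add_le (x - x₀) x₀
      rw [mem_closedBall, dist_eq_norm] at hx
      linarith [norm_nonneg z])
    have h2 := hreg₀ x hx
    have h3 : |W x * w x| ≤ |W x| * 1 := by
      rw [abs_mul, abs_of_nonneg (hw.nonneg x)]
      exact mul_le_mul_of_nonneg_left (hw.le_one x) (abs_nonneg _)
    linarith [neg_abs_le (Lop a b w x), neg_abs_le (W x * w x)]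
  have hwZ : ∀ x ∈ closedBall z (r + 1), x ∉ closedBall x₀ r₀ →
      c ≤ Lop a b w x + W x * w x := fun x hx hxD => by
    rw [mem_closedBall] at hx
    rw [mem_closedBall, not_le] at hxD
    have hxx : dist x x₀ ≤ dist x₀ z + r + 1 := by linarith [dist_triangle_right x x₀ z]
    have h1 := hc x hxD.le hxx
    have h2 := hreg₀ x (by rw [mem_closedBall]; linarith)
    have h3 : -W x * w x ≤ K * w x :=
      mul_le_mul_of_nonneg_right (by linarith [neg_abs_le (W x)]) (hw.nonneg x)
    linarith
  have hwoff : ∀ x, x ∉ closedBall x₀ r₀ → 0 ≤ Lop a b w x + W x * w x := fun x hx =>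
    hw.potential_nonneg (fun x hx => by
      linarith [hreg₀ x (ball_subset_closedBall hx), neg_abs_le (W x)])
      (by rw [mem_closedBall, not_le] at hx; exact hx.le)
  -- bounds on `ψ`
  obtain ⟨ψ₁, hψ₁0, hψ₁⟩ := (isCompact_closedBall z r).exists_pos_lower_bound
    hψ.continuous.continuousOn fun x _ => hψ0 x
  obtain ⟨ψ₂, hψ₂⟩ := (isCompact_closedBall z r).exists_bound_of_continuousOn
    hψ.continuous.continuousOn
  have hψ₂' : ∀ x ∈ closedBall z r, ψ x ≤ ψ₂ := fun x hx => (le_abs_self _).trans (hψ₂ x hx)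
  have hψ₂0 : 0 < ψ₂ := (hψ0 z).trans_le (hψ₂' z (mem_closedBall_self hr.le))
  obtain ⟨ψ₃, hψ₃0, hψ₃⟩ := (isCompact_closedBall x₀ R).exists_pos_lower_bound
    hψ.continuous.continuousOn fun x _ => hψ0 x
  obtain ⟨N, hN⟩ : ∃ N, N = 2 * δ * ψ₂ / ψ₁ := ⟨_, rfl⟩
  have hN0 : 0 < N := by rw [hN]; positivity
  have hNψ : N * ψ₁ = 2 * δ * ψ₂ := by rw [hN]; field_simp
  -- the small parameters
  obtain ⟨s, hs0, hs1, hsC⟩ : ∃ s > 0, s ≤ 1 ∧ s * (C₁ + K) ≤ m / 2 := by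
    refine ⟨min 1 (m / (2 * (C₁ + K + 1))), by positivity, min_le_left _ _, ?_⟩
    calc min 1 (m / (2 * (C₁ + K + 1))) * (C₁ + K) ≤ m / (2 * (C₁ + K + 1)) * (C₁ + K + 1) := by
          exact mul_le_mul (min_le_right _ _) (by linarith) (by positivity) (by positivity)
      _ = m / 2 := by field_simp
  obtain ⟨e, he⟩ : ∃ e, e = min (m / 2) (s * c) := ⟨_, rfl⟩
  have he0 : 0 < e := by rw [he]; positivity
  have hem : e ≤ m / 2 := he ▸ min_le_left _ _
  have hec : e ≤ s * c := he ▸ min_le_right _ _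
  obtain ⟨t, ht0, ht⟩ : ∃ t > 0, t * (δ * ψ₂) = e / 2 :=
    ⟨e / (2 * (δ * ψ₂)), by positivity, by field_simp⟩
  obtain ⟨ε, hε0, hε⟩ : ∃ ε > 0, N * ε = e / 2 := ⟨e / (2 * N), by positivity, by field_simp⟩
  obtain ⟨A₀, hA₀0, hcorr⟩ := hS.exists_corrector hd (by linarith : 1 ≤ R) hK0
    (isCompact_closedBall x₀ r₀) hDR hε0
  obtain ⟨A, hA0, hA1, hA2⟩ : ∃ A > 0, A₀ ≤ A * ψ₁ ∧ 1 ≤ A * ψ₃ := by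
    refine ⟨A₀ / ψ₁ + 1 / ψ₃, by positivity, ?_, ?_⟩
    · rw [add_mul, div_mul_cancel₀ _ hψ₁0.ne']
      exact le_add_of_nonneg_right (by positivity)
    · rw [add_mul, div_mul_cancel₀ 1 hψ₃0.ne']
      exact le_add_of_nonneg_left (by positivity)
  have hAψ : ∀ x ∈ closedBall x₀ R, 1 ≤ A * ψ x := fun x hx =>
    hA2.trans (mul_le_mul_of_nonneg_left (hψ₃ x hx) hA0.le)
  obtain ⟨κ, hκ0, hκ1, hκ⟩ : ∃ κ > 0, κ ≤ 1 ∧ κ * (4 * A) ≤ t * η := by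
    refine ⟨min 1 (t * η / (4 * A)), by positivity, min_le_left _ _, ?_⟩
    rw [← le_div_iff₀ (by positivity)]
    exact min_le_right _ _
  -- the ingredients
  obtain ⟨φ₁, hφ₁, hφ₁0, hφ₁sup⟩ := happrox κ hκ0
  obtain ⟨φ, hφ, hφ0, hφsup, hφD, hφD'⟩ := exists_normalized hφ₁ hφ₁0 hφ₁sup
    (isCompact_closedBall x₀ r₀) ⟨x₀, mem_closedBall_self hr₀0.le⟩
  have hφK : ∀ x, |W x| + 1 ≤ K → Lop a b φ x ≤ K * φ x := fun x hx =>
    (hφsup x).trans (mul_le_mul_of_nonneg_right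
      (by linarith [neg_abs_le (W x), hh0 x]) (hφ0 x).le)
  have hφw : ∀ x, w x ≤ φ x := fun x => by
    simpa using IsBarrier.mul_le hS hw hφ hφ0 (fun x hx => hφK x (hreg₀ x hx)) one_pos hφD x
  obtain ⟨E, hE⟩ : ∃ E, E = closedBall z r ∩ {x | A * ψ x ≤ φ x} := ⟨_, rfl⟩
  have hEc : IsCompact E := by
    rw [hE]
    exact (isCompact_closedBall z r).inter_right
      (isClosed_le (continuous_const.mul hψ.continuous) hφ.continuous)
  have hEz : E ⊆ closedBall z r := hE ▸ inter_subset_left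
  obtain ⟨v, hvC, hv0, hvoff, hvle, hvE⟩ := hcorr φ hφ hφ0 (fun x hx => hφK x (hregz x hx)) hφD'
    (A * ψ₁) hA1 E hEc hEz (fun x hx =>
      (mul_le_mul_of_nonneg_left (hψ₁ x (hEz hx)) hA0.le).trans (hE ▸ hx).2)
  obtain ⟨G, hGC, hGlow, hGup, hGsup⟩ :=
    exists_truncation (b := b) hS.posdef hφ hφ0 hψ hψ0 hA0
  have hGw : ∀ x, w x ≤ G x := fun x => (le_min (hφw x) (by
    by_cases hx : x ∈ ball x₀ R
    · exact (hw.le_one x).trans (hAψ x (ball_subset_closedBall hx))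
    · rw [(hw.eq_zero x hx).1]; exact (mul_pos hA0 (hψ0 x)).le)).trans (hGlow x)
  obtain ⟨C₃, hC₃0, hC₃⟩ : ∃ C ≥ 0, ∀ x, v x ≤ C * ψ x := by
    obtain ⟨C, hC⟩ := (isCompact_closedBall z (r + 1)).exists_bound_of_continuousOn
      (hvC.div hψ fun x => (hψ0 x).ne').continuous.continuousOn
    refine ⟨max C 0, le_max_right _ _, fun x => ?_⟩
    by_cases hx : x ∈ closedBall z (r + 1)
    · rw [← div_le_iff₀ (hψ0 x)]
      exact ((le_abs_self _).trans (hC x hx)).trans (le_max_left _ _)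
    · rw [(hvoff x hx).1]; exact mul_nonneg (le_max_right _ _) (hψ0 x).le
  have hLΦ : ∀ x, Lop a b (fun x => G x + N * v x - s * w x + t * ψ x) x
      = Lop a b G x + N * Lop a b v x - s * Lop a b w x + t * Lop a b ψ x := fun x => by
    rw [Lop_add ((hGC.add (contDiff_const.mul hvC)).sub (contDiff_const.mul hw.contDiff))
      (contDiff_const.mul hψ), Lop_sub_const_mul (hGC.add (contDiff_const.mul hvC)) hw.contDiff,
      Lop_add hGC (contDiff_const.mul hvC), Lop_const_mul hvC, Lop_const_mul hψ]
  have hsw : ∀ x, 0 ≤ s * w x ∧ s * w x ≤ w x := fun x =>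
    ⟨mul_nonneg hs0.le (hw.nonneg x), mul_le_of_le_one_left (hw.nonneg x) hs1⟩
  have hΦlow : ∀ x, t * ψ x ≤ G x + N * v x - s * w x + t * ψ x := fun x => by
    linarith [hGw x, (hsw x).2, mul_nonneg hN0.le (hv0 x)]
  have hΦup : ∀ x, G x + N * v x - s * w x + t * ψ x ≤ (2 * A + N * C₃ + t) * ψ x := fun x => by
    have h1 := mul_le_mul_of_nonneg_left (hC₃ x) hN0.le
    linarith only [h1, hGup x, (hsw x).1]
  refine ⟨fun x => G x + N * v x - s * w x + t * ψ x,
    ((hGC.add (contDiff_const.mul hvC)).sub (contDiff_const.mul hw.contDiff)).add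
      (contDiff_const.mul hψ), fun x => (mul_pos ht0 (hψ0 x)).trans_le (hΦlow x),
    t * η / 2 / (2 * A + N * C₃ + t), by positivity, fun x => ?_⟩
  have hfinal : Lop a b (fun x => G x + N * v x - s * w x + t * ψ x) x
      + W x * (G x + N * v x - s * w x + t * ψ x) ≤ -(t * η / 2 * ψ x) := by
    rw [hLΦ]
    obtain ⟨P, Q, hP, hQ, hPQ, hQle, hQ0, hGx⟩ := hGsup x _ _ (hφsup x) (hψsup x)
    have hGG : Lop a b G x + W x * G x
        ≤ κ * P - h x * P - η * Q + (ball z r).indicator (fun _ => δ) x * Q := by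
      rw [← hPQ]; linarith
    have hκP : κ * P ≤ t * η / 2 * ψ x := by
      have h1 : P ≤ 2 * (A * ψ x) := by linarith [hGup x]
      have h2 := mul_le_mul_of_nonneg_left h1 hκ0.le
      have h3 := mul_le_mul_of_nonneg_right hκ (hψ0 x).le
      linarith
    have hhP : 0 ≤ h x * P := mul_nonneg (hh0 x) hP
    have hηQ : 0 ≤ η * Q := mul_nonneg hη.le hQ
    have hψx := mul_le_mul_of_nonneg_left (hψsup x) ht0.le
    have hind : x ∉ closedBall z (r + 1) → (ball z r).indicator (fun _ => δ) x = 0 := fun hx =>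
      indicator_of_notMem (fun hx' => hx (closedBall_subset_closedBall (by linarith)
        (ball_subset_closedBall hx'))) _
    have hindψ : (ball z r).indicator (fun _ => δ) x * ψ x ≤ δ * ψ₂ := by
      by_cases hx : x ∈ ball z r
      · rw [indicator_of_mem hx]
        exact mul_le_mul_of_nonneg_left (hψ₂' x (ball_subset_closedBall hx)) hδ.le
      · rw [indicator_of_notMem hx, zero_mul]; positivity
    have hvx : x ∈ closedBall z (r + 1) →
        (ball z r).indicator (fun _ => δ) x * Q + N * (Lop a b v x + W x * v x) ≤ N * ε := by
      intro hx
      have hWv : W x * v x ≤ K * v x := mul_le_mul_of_nonneg_right (by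
        linarith [hregz x (closedBall_subset_closedBall (by linarith) hx), le_abs_self (W x)])
        (hv0 x)
      by_cases hxE : x ∈ E
      · have h1 := mul_le_mul_of_nonneg_left
          ((add_le_add_right hWv (Lop a b v x)).trans (hvE x hxE)) hN0.le
        have h2 : (ball z r).indicator (fun _ => δ) x * Q ≤ δ * (2 * (A * ψ₂)) := by
          refine mul_le_mul (indicator_le_self' (fun _ _ => hδ.le) x) (hQle.trans ?_) hQ hδ.le
          have := hψ₂' x (hEz hxE)
          gcongr
        have h3 : N * (A * ψ₁) = δ * (2 * (A * ψ₂)) := by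
          linear_combination A * hNψ
        linarith
      · have h1 := mul_le_mul_of_nonneg_left
          ((add_le_add_right hWv (Lop a b v x)).trans (hvle x)) hN0.le
        have h2 : (ball z r).indicator (fun _ => δ) x * Q = 0 := by
          by_cases hx' : x ∈ ball z r
          · have : φ x ≤ A * ψ x := by
              by_contra! hlt
              exact hxE (hE ▸ ⟨ball_subset_closedBall hx', hlt.le⟩)
            rw [hQ0 this, mul_zero]
          · rw [indicator_of_notMem hx', zero_mul]
        linarith
    by_cases hxD : x ∈ closedBall x₀ r₀
    · have hxR : x ∈ closedBall x₀ R := closedBall_subset_closedBall (by linarith) hxD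
      have hG1 : 1 ≤ P + Q := by
        rw [hPQ]; exact (le_min (hφD x hxD) (hAψ x hxR)).trans (hGlow x)
      have hmPQ : m ≤ h x * P + η * Q := by
        have h1 := mul_le_mul_of_nonneg_right (hmh.trans (hhD x hxD)) hP
        have h2 := mul_le_mul_of_nonneg_right hmη hQ
        have h3 := mul_le_mul_of_nonneg_left hG1 hm0.le
        linarith only [h1, h2, h3]
      have hsx := mul_le_mul_of_nonneg_left (hwD x hxR) hs0.le
      by_cases hxZ : x ∈ closedBall z (r + 1)
      · have h1 := hvx hxZ
        have h2 := mul_le_mul_of_nonneg_left hindψ ht0.le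
        linarith only [hGG, hκP, hhP, hηQ, hψx, hmPQ, hsx, hsC, hem, hε, ht, h1, h2]
      · rw [hind hxZ] at hGG hψx
        rw [(hvoff x hxZ).1, (hvoff x hxZ).2]
        linarith only [hGG, hκP, hhP, hηQ, hψx, hmPQ, hsx, hsC, hm0]
    · by_cases hxZ : x ∈ closedBall z (r + 1)
      · have h1 := hvx hxZ
        have h2 := mul_le_mul_of_nonneg_left hindψ ht0.le
        have h3 := mul_le_mul_of_nonneg_left (hwZ x hxZ hxD) hs0.le
        linarith only [hGG, hκP, hhP, hηQ, hψx, hec, hε, ht, h1, h2, h3]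
      · rw [hind hxZ] at hGG hψx
        rw [(hvoff x hxZ).1, (hvoff x hxZ).2]
        have h3 := mul_nonneg hs0.le (hwoff x hxD)
        linarith only [hGG, hκP, hhP, hηQ, hψx, h3]
  refine hfinal.trans ?_
  have h1 := mul_le_mul_of_nonneg_left (hΦup x)
    (by positivity : 0 ≤ t * η / 2 / (2 * A + N * C₃ + t))
  have h2 : t * η / 2 / (2 * A + N * C₃ + t) * ((2 * A + N * C₃ + t) * ψ x) = t * η / 2 * ψ x := by
    field_simp
  rw [h2] at h1
  show _ ≤ -(t * η / 2 / (2 * A + N * C₃ + t)) * (G x + N * v x - s * w x + t * ψ x)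
  linarith

end Merging

section Threshold

variable {d : ℕ} {a : Euc d → Matrix (Fin d) (Fin d) ℝ} {b : Euc d → Euc d}

lemma supersolutions_mono_of_le {V V' : Euc d → ℝ} {c μ : ℝ} (hVV' : ∀ x, V' x ≤ V x + c)
    (hμ : μ ∈ supersolutions a b V univ) : μ + c ∈ supersolutions a b V' univ := by
  obtain ⟨φ, hφ0, hφ, hsup⟩ := hμ
  refine ⟨φ, hφ0, hφ, fun x hx => ?_⟩
  have h1 := mul_le_mul_of_nonneg_right (hVV' x) (hφ0 x hx).le
  linarith [hsup x hx]

lemma lamStarFinite.of_le {V V' : Euc d → ℝ} {c : ℝ} (hfin : lamStarFinite a b V univ)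
    (hle : ∀ x, V x ≤ V' x) (hVV' : ∀ x, V' x ≤ V x + c) : lamStarFinite a b V' univ := by
  obtain ⟨⟨μ, hμ⟩, B, hB⟩ := hfin
  refine ⟨⟨μ + c, supersolutions_mono_of_le hVV' hμ⟩, B, fun ν hν => ?_⟩
  have := supersolutions_mono_of_le (c := 0) (fun x => by simpa using hle x) hν
  exact hB (by simpa using this)

lemma lamStar_le_add {V V' : Euc d → ℝ} {c : ℝ} (hfin : lamStarFinite a b V univ)
    (hfin' : lamStarFinite a b V' univ) (hVV' : ∀ x, V' x ≤ V x + c) :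
    lamStar a b V' univ ≤ lamStar a b V univ + c := by
  rw [← sub_le_iff_le_add]
  refine le_csInf hfin.1 fun μ hμ => ?_
  rw [sub_le_iff_le_add]
  exact csInf_le hfin'.2 (supersolutions_mono_of_le hVV' hμ)

/-- A tall enough bump pushes the generalized principal eigenvalue above any given level. -/
lemma StandingB.exists_forall_notMem_supersolutions (hS : StandingB a b) {V : Euc d → ℝ}
    (hV : ∀ R > 0, ∃ C, ∀ x : Euc d, ‖x‖ ≤ R → |V x| ≤ C) (lam : ℝ) (z : Euc d) {r : ℝ}
    (hr : 0 < r) :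
    ∃ δ > 0, ∀ μ < lam, μ ∉ supersolutions a b
      (fun x => V x + (ball z r).indicator (fun _ => δ) x) univ := by
  obtain ⟨C, hC⟩ := hV (‖z‖ + r) (by positivity)
  have hnorm : ∀ x ∈ closedBall z (3 * r / 4), ‖x‖ ≤ ‖z‖ + r := fun x hx => by
    have h1 : ‖x‖ ≤ ‖x - z‖ + ‖z‖ := by simpa using norm_add_le (x - z) z
    rw [mem_closedBall, dist_eq_norm] at hx
    linarith
  obtain ⟨K, hK⟩ : ∃ K, K = |C| + |lam| := ⟨_, rfl⟩
  have hK0 : 0 ≤ K := by rw [hK]; positivity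
  obtain ⟨w, hw⟩ := hS.exists_barrier z (half_pos hr) (by linarith : r / 2 < 3 * r / 4) hK0
  obtain ⟨C₁, hC₁0, hC₁⟩ := hS.Lop_bounded hw.contDiff (‖z‖ + r)
  obtain ⟨w₀, hw₀0, hw₀⟩ := (isCompact_closedBall z (r / 2)).exists_pos_lower_bound
    hw.contDiff.continuous.continuousOn
    fun x hx => hw.pos x (closedBall_subset_ball (by linarith) hx)
  obtain ⟨δ, hδ⟩ : ∃ δ, δ = K + (C₁ + 1) / w₀ := ⟨_, rfl⟩
  have hδK : (δ - K) * w₀ = C₁ + 1 := by rw [hδ]; field_simp; ring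
  have hKδ : 0 < δ - K := by rw [hδ, add_sub_cancel_left]; positivity
  refine ⟨δ, by linarith, fun μ hμ ⟨φ, hφ0, hφ, hsup⟩ => ?_⟩
  rw [contDiffOn_univ] at hφ
  have hpos : ∀ x, 0 < φ x := fun x => hφ0 x (mem_univ x)
  have key := comparison hS hφ hpos hw.contDiff (isCompact_closedBall z (3 * r / 4))
    (K := K - δ) (M := 0)
    (fun y hy => (hw.eq_zero y fun h => hy (ball_subset_closedBall h)).1.le) le_rfl
    (fun y hy => ?_) (fun y hy hwy _ => ?_) z
  · linarith [hw.pos z (mem_ball_self (by linarith))]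
  · have hyr : y ∈ ball z r := closedBall_subset_ball (by linarith) hy
    have h1 : Lop a b φ y + (V y + (ball z r).indicator (fun _ => δ) y) * φ y ≤ μ * φ y :=
      hsup y (mem_univ y)
    rw [indicator_of_mem hyr] at h1
    have h2 := mul_le_mul_of_nonneg_right (by
      linarith [neg_abs_le (V y), hC y (hnorm y hy), le_abs_self C, le_abs_self lam] :
      μ - V y - δ ≤ K - δ) (hpos y).le
    linarith
  · by_cases hyr : y ∈ closedBall z (r / 2)
    · have h1 := mul_le_mul_of_nonneg_left (hw₀ y hyr) hKδ.le
      linarith [neg_abs_le (Lop a b w y), hC₁ y (hnorm y hy)]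
    · have hyb : y ∈ ball z (3 * r / 4) := by
        by_contra h
        exact hwy.ne' (hw.eq_zero y h).1
      obtain ⟨c, hc0, hc⟩ := hw.strict (dist y z) hyb
      rw [mem_closedBall, not_le] at hyr
      have h1 := hc y hyr.le le_rfl
      have h2 : 0 ≤ δ * w y := mul_nonneg (by linarith) hwy.le
      linarith

lemma indicator_const_le_add_abs (s : Set (Euc d)) (δ δ' : ℝ) (x : Euc d) :
    s.indicator (fun _ => δ') x ≤ s.indicator (fun _ => δ) x + |δ' - δ| := by
  by_cases hx : x ∈ s
  · rw [indicator_of_mem hx, indicator_of_mem hx]; linarith [le_abs_self (δ' - δ)]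
  · rw [indicator_of_notMem hx, indicator_of_notMem hx]; linarith [abs_nonneg (δ' - δ)]

lemma lamStarFinite.add_indicator {V : Euc d → ℝ} (hfin : lamStarFinite a b V univ)
    (s : Set (Euc d)) {δ : ℝ} (hδ : 0 ≤ δ) :
    lamStarFinite a b (fun x => V x + s.indicator (fun _ => δ) x) univ :=
  hfin.of_le (c := δ) (fun x => le_add_of_nonneg_right (indicator_nonneg (fun _ _ => hδ) x))
    fun x => by gcongr; exact indicator_le_self' (fun _ _ => hδ) x

/-- Every level above `λ*(𝓛, V)` is attained by adding a suitable bump on a given ball. -/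
lemma StandingB.exists_lamStar_add_indicator_eq (hS : StandingB a b) {V : Euc d → ℝ}
    (hV : ∀ R > 0, ∃ C, ∀ x : Euc d, ‖x‖ ≤ R → |V x| ≤ C) (hfin : lamStarFinite a b V univ)
    {lam : ℝ} (hlam : lamStar a b V univ < lam) (z : Euc d) {r : ℝ} (hr : 0 < r) :
    ∃ δ > 0, lamStar a b (fun x => V x + (ball z r).indicator (fun _ => δ) x) univ = lam := by
  obtain ⟨δ₁, hδ₁0, hδ₁⟩ := hS.exists_forall_notMem_supersolutions hV lam z hr
  obtain ⟨f, hf⟩ : ∃ f : ℝ → ℝ, f = fun δ =>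
    lamStar a b (fun x => V x + (ball z r).indicator (fun _ => δ) x) univ := ⟨_, rfl⟩
  have hf0 : f 0 = lamStar a b V univ := by simp [hf]
  have hf1 : lam ≤ f δ₁ := by
    rw [hf]
    exact le_csInf (hfin.add_indicator _ hδ₁0.le).1 fun μ hμ => by
      by_contra! hlt
      exact hδ₁ μ hlt hμ
  have hlip : ∀ δ ∈ Icc 0 δ₁, ∀ δ' ∈ Icc 0 δ₁, f δ' ≤ f δ + |δ' - δ| := fun δ hδ δ' hδ' => by
    rw [hf]
    exact lamStar_le_add (hfin.add_indicator _ hδ.1) (hfin.add_indicator _ hδ'.1) fun x => by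
      linarith [indicator_const_le_add_abs (ball z r) δ δ' x]
  have hcont : ContinuousOn f (Icc 0 δ₁) := by
    refine (LipschitzOnWith.of_le_add (s := Icc 0 δ₁) fun δ' hδ' δ hδ => ?_).continuousOn
    rw [Real.dist_eq]
    exact hlip δ hδ δ' hδ'
  obtain ⟨δ, hδ, hδlam⟩ := intermediate_value_Icc hδ₁0.le hcont
    ⟨(hf0.trans_lt hlam).le, hf1⟩
  refine ⟨δ, hδ.1.lt_of_ne ?_, by rw [← hδlam, hf]⟩
  rintro rfl
  linarith

lemma C0plus.exists_le {h : Euc d → ℝ} (hh : C0plus h) : ∃ C, ∀ x, h x ≤ C := by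
  obtain ⟨C, hC⟩ := (ZeroAtInftyContinuousMap.isBounded_range
    (⟨⟨h, hh.1⟩, hh.2.2.2⟩ : ZeroAtInftyContinuousMap (Euc d) ℝ)).bddAbove
  exact ⟨C, fun x => hC ⟨x, rfl⟩⟩

end Threshold

/-- Corollary 3.2: for any `λ > λ*(V)` and any open ball `𝓑` there exists `δ > 0` such
that `λ = λ*(V + δ·1_𝓑)` and `λ*` is strictly right monotone at `V + δ·1_𝓑`. -/
theorem statement8 {d : ℕ} (hd : 1 ≤ d)
    (a : Euc d → Matrix (Fin d) (Fin d) ℝ) (b : Euc d → Euc d)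
    (hstand : StandingB a b)
    (V : Euc d → ℝ) (hVmeas : Measurable V)
    (hVlocbdd : ∀ R > 0, ∃ C, ∀ x : Euc d, ‖x‖ ≤ R → |V x| ≤ C)
    (hVbdd : ∃ m, ∀ x, m ≤ V x)
    (hfin : lamStarFinite a b V Set.univ) :
    ∀ lam : ℝ, lamStar a b V Set.univ < lam →
    ∀ (z : Euc d) (r : ℝ), 0 < r → ∃ δ > 0,
      lam = lamStar a b (fun x => V x + (Metric.ball z r).indicator (fun _ => δ) x) Set.univ ∧
      StrictMonoRight a b (fun x => V x + (Metric.ball z r).indicator (fun _ => δ) x) := by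
  intro lam hlam z r hr
  obtain ⟨δ, hδ0, hδ⟩ := hstand.exists_lamStar_add_indicator_eq hVlocbdd hfin hlam z hr
  have hfinδ := hfin.add_indicator (ball z r) hδ0.le
  refine ⟨δ, hδ0, hδ.symm, fun h hh => ?_⟩
  by_contra! hle
  obtain ⟨C, hC⟩ := hh.exists_le
  have hfinh := hfinδ.of_le (V' := fun x => V x + (ball z r).indicator (fun _ => δ) x + h x)
    (fun x => le_add_of_nonneg_right (hh.2.1 x)) fun x => add_le_add_right (hC x) _
  obtain ⟨μ, ⟨ψ, hψ0, hψ, hψsup⟩, hμ⟩ := exists_lt_of_csInf_lt hfin.1 hlam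
  obtain ⟨x₀, hx₀⟩ := hh.2.2.1
  have hW : ∀ R > 0, ∃ C, ∀ x : Euc d, ‖x‖ ≤ R →
      |V x + (ball z r).indicator (fun _ => δ) x - lam| ≤ C := fun R hR => by
    obtain ⟨C, hC⟩ := hVlocbdd R hR
    refine ⟨C + δ + |lam|, fun x hx => ?_⟩
    have h1 : |(ball z r).indicator (fun _ => δ) x| ≤ δ := by
      rw [abs_of_nonneg (indicator_nonneg (fun _ _ => hδ0.le) x)]
      exact indicator_le_self' (fun _ _ => hδ0.le) x
    have h2 := abs_sub_le (V x + (ball z r).indicator (fun _ => δ) x) 0 lam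
    rw [sub_zero, zero_sub, abs_neg] at h2
    linarith [abs_add_le (V x) ((ball z r).indicator (fun _ => δ) x), hC x hx]
  have happrox : ∀ κ > 0, ∃ φ : Euc d → ℝ, ContDiff ℝ 2 φ ∧ (∀ x, 0 < φ x) ∧
      ∀ x, Lop a b φ x ≤
        (κ - (V x + (ball z r).indicator (fun _ => δ) x - lam) - h x) * φ x := fun κ hκ => by
    obtain ⟨ν, ⟨φ, hφ0, hφ, hφsup⟩, hν⟩ := exists_lt_of_csInf_lt hfinh.1
      (show sInf _ < lam + κ from (hle.trans_eq hδ).trans_lt (by linarith))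
    refine ⟨φ, contDiffOn_univ.1 hφ, fun x => hφ0 x (mem_univ x), fun x => ?_⟩
    have h1 := mul_le_mul_of_nonneg_right hν.le (hφ0 x (mem_univ x)).le
    linarith [hφsup x (mem_univ x)]
  obtain ⟨Φ, hΦ, hΦ0, η, hη0, hΦsup⟩ := hstand.exists_strict_supersolution hd hW
    (contDiffOn_univ.1 hψ) (fun x => hψ0 x (mem_univ x)) (sub_pos.2 hμ) hδ0 hr
    (fun x => by linarith [hψsup x (mem_univ x)]) hh.1 hh.2.1 hx₀ happrox
  have hmem : lam - η ∈ supersolutions a b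
      (fun x => V x + (ball z r).indicator (fun _ => δ) x) univ :=
    ⟨Φ, fun x _ => hΦ0 x, hΦ.contDiffOn, fun x _ => by linarith [hΦsup x]⟩
  have := csInf_le hfinδ.2 hmem
  rw [lamStar] at hδ
  linarith
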